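/- arXiv:1810.07499 — 2 statements merged into one kernel-verified Lean document; each statement's English description precedes it below -/
import Mathlib

section
/- For every k, l ∈ ℕ ∪ {0} there exist C > 0 and R₀ ≥ 1 such that |∫_{𝕊^{N−1}} (d/dr)^l [𝓛^kΦ(rθ)] dθ| ≤ C r^{−N−(1+(k−1)₊)σ−l} for all r ≥ R₀, where (k−1)₊ = max{k−1, 0}, (d/dr)^l denotes the l-th derivative of the map r ↦ 𝓛^kΦ(rθ) for fixed θ, and dθ is the surface measure on 𝕊^{N−1}. -/
open MeasureTheory Metric Real Set
open scoped InnerProductSpace ENNReal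

noncomputable section

/-- `ℝ^N` as a Euclidean space. -/
abbrev Eu (N : ℕ) := EuclideanSpace ℝ (Fin N)

/-- The unit sphere `𝕊^{N-1} ⊂ ℝ^N`. -/
abbrev Sph (N : ℕ) := Metric.sphere (0 : Eu N) 1

/-- The surface measure `dθ` on the unit sphere. -/
def sphMeas (N : ℕ) : Measure (Sph N) := (volume : Measure (Eu N)).toSphere

/-- The stable operator `𝓛` associated to the order `σ` and the spectral measure `μ`:
`𝓛u(x) = ∫_{𝕊^{N−1}} ∫_0^∞ (u(x) − (u(x+rθ)+u(x−rθ))/2) r^{−1−σ} dr dμ(θ)`. -/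
def Lop (N : ℕ) (σ : ℝ) (μ : Measure (Sph N)) (u : Eu N → ℝ) (x : Eu N) : ℝ :=
  ∫ θ : Sph N, (∫ r in Ioi (0 : ℝ),
    (u x - (u (x + r • (θ : Eu N)) + u (x - r • (θ : Eu N))) / 2) * r ^ (-1 - σ)) ∂μ

/-- The ellipticity (non-degeneracy) condition on the spectral measure. -/
def Elliptic (N : ℕ) (σ : ℝ) (μ : Measure (Sph N)) (lam : ℝ) : Prop :=
  ∀ ζ : Sph N, lam ≤ ∫ θ : Sph N, |⟪(ζ : Eu N), (θ : Eu N)⟫_ℝ| ^ σ ∂μ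

/-- The weight `ρ(x) = (1+|x|)^{−(N+σ)}`. -/
def wt (N : ℕ) (σ : ℝ) (x : Eu N) : ℝ := (1 + ‖x‖) ^ (-((N : ℝ) + σ))

/-- `u ∈ L¹_loc([0,∞); L_ρ)`. -/
def L1locRho (N : ℕ) (σ : ℝ) (u : Eu N → ℝ → ℝ) : Prop :=
  ∀ T > 0, IntegrableOn (fun q : Eu N × ℝ => u q.1 q.2 * wt N σ q.1)
    ((univ : Set (Eu N)) ×ˢ Ioo (0 : ℝ) T) volume

/-- Very weak solution of `∂ₜu + 𝓛u = 𝓛f` in `Q = ℝ^N × (0,∞)` with initial datum `u₀`: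
`∫_Q u ∂ₜζ + ∫ u₀ ζ(·,0) = ∫_Q (u−f) 𝓛ζ` for all `ζ ∈ C_c^∞(ℝ^N × [0,∞))`. -/
def IsVeryWeakSol (N : ℕ) (σ : ℝ) (μ : Measure (Sph N)) (f : Eu N → ℝ → ℝ)
    (u0 : Eu N → ℝ) (u : Eu N → ℝ → ℝ) : Prop :=
  L1locRho N σ u ∧
  ∀ ζ : Eu N × ℝ → ℝ, ContDiff ℝ (⊤ : ℕ∞) ζ → HasCompactSupport ζ →
    (∫ q : Eu N × ℝ in (univ : Set (Eu N)) ×ˢ Ioi (0 : ℝ),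
        u q.1 q.2 * deriv (fun s => ζ (q.1, s)) q.2)
      + (∫ x : Eu N, u0 x * ζ (x, 0))
    = ∫ q : Eu N × ℝ in (univ : Set (Eu N)) ×ˢ Ioi (0 : ℝ),
        (u q.1 q.2 - f q.1 q.2) * Lop N σ μ (fun y => ζ (y, q.2)) q.1

/-- The multiplier `m(ξ)` of `𝓛`. -/
def symb (N : ℕ) (σ : ℝ) (μ : Measure (Sph N)) (ξ : Eu N) : ℝ :=
  ∫ θ : Sph N, (∫ r in Ioi (0 : ℝ),
    (1 - Real.cos (r * ⟪ξ, (θ : Eu N)⟫_ℝ)) * r ^ (-1 - σ)) ∂μ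

/-- `𝓛^kΦ`, the inverse Fourier transform of `m(ξ)^k e^{−m(ξ)}`; `k = 0` gives the
heat-kernel profile `Φ`. -/
def LkPhi (N : ℕ) (σ : ℝ) (μ : Measure (Sph N)) (k : ℕ) (x : Eu N) : ℝ :=
  (2 * π) ^ (-(N : ℝ)) *
    (∫ ξ : Eu N, ((symb N σ μ ξ ^ k * Real.exp (-symb N σ μ ξ) : ℝ) : ℂ) *
        Complex.exp (Complex.I * (⟪x, ξ⟫_ℝ : ℂ))).re

/-- The heat kernel `P(x,t) = t^{−N/σ} Φ(x t^{−1/σ})`. -/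
def heatK (N : ℕ) (σ : ℝ) (μ : Measure (Sph N)) (x : Eu N) (t : ℝ) : ℝ :=
  t ^ (-(N : ℝ) / σ) * LkPhi N σ μ 0 ((t ^ (-(1 : ℝ) / σ)) • x)

/-- `𝓛P(x,t) = t^{−N/σ−1} (𝓛Φ)(x t^{−1/σ})`. -/
def LheatK (N : ℕ) (σ : ℝ) (μ : Measure (Sph N)) (x : Eu N) (t : ℝ) : ℝ :=
  t ^ (-(N : ℝ) / σ - 1) * LkPhi N σ μ 1 ((t ^ (-(1 : ℝ) / σ)) • x)

/-- The σ-parabolic norm `|(x,t)|_σ = (|x|² + |t|^{2/σ})^{1/2}`. -/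
def pnorm (N : ℕ) (σ : ℝ) (x : Eu N) (t : ℝ) : ℝ := Real.sqrt (‖x‖ ^ 2 + |t| ^ (2 / σ))

/-- `f ∈ C^α_σ(Q)` with Hölder constant `c`. -/
def HolderSigma (N : ℕ) (σ α c : ℝ) (f : Eu N → ℝ → ℝ) : Prop :=
  ∀ x t x' t', 0 < t → 0 < t' → |f x t - f x' t'| ≤ c * pnorm N σ (x - x') (t - t') ^ α

/-!
The symbol `m` has no regularity across directions, so `𝓛^kΦ` need not decay like `|x|^(-N-σ)`
pointwise; only the spherical average does. Write the `l`-th radial derivative as the integral of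
`m(ξ)^k e^{-m(ξ)} (i⟪θ, ξ⟫)^l e^{ir⟪θ, ξ⟫}` and let `ω = ξ/|ξ|`. Apart from `m` the integrand
depends on `θ` and `ω` only through `⟪θ, ω⟫`, so under the average over `θ` the two directions may
be exchanged: `m(ξ)` becomes `m(ω)|ξ|^σ` with `ω` fixed, a radial multiplier differentiated in the
direction `ω`.

For such a multiplier, subtract from `u^k e^{-u}`, `u = m(ω)|ξ|^σ`, its value at `u = 0`. The
remainder is `O(u^{max k 1})` and, along lines in the direction `ω`, extends holomorphically to
discs of radius proportional to `|ξ|`, so its differences gain the same powers of `|ξ|` as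
derivatives would. The shift by `(π/r)ω` changes the sign of `e^{ir⟪ω, ξ⟫}`, so the integral can
be rewritten with `M`-th differences of the multiplier, which yields the decay rate once `M` is
large. The subtracted part is the polynomial `(i⟪ω, ξ⟫)^l`, which these differences annihilate.
-/

/-! ### Iterated finite differences -/

section ForwardDifference

variable {A A' G : Type*} [AddCommGroup A] [AddCommGroup A'] [AddCommGroup G]

lemma fwdDiff_iter_congr {f : A → G} {g : A' → G} {x h : A} {x' h' : A'} {M : ℕ}
    (hfg : ∀ j ≤ M, f (x + j • h) = g (x' + j • h')) :
    (fwdDiff h)^[M] f x = (fwdDiff h')^[M] g x' := by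
  rw [fwdDiff_iter_eq_sum_shift, fwdDiff_iter_eq_sum_shift]
  refine Finset.sum_congr rfl fun j hj => ?_
  rw [hfg j (Nat.lt_succ_iff.1 (Finset.mem_range.1 hj))]

lemma fwdDiff_iter_addMonoidHom_pow_eq_zero {R : Type*} [CommRing R] (φ : A →+ R) {l M : ℕ}
    (hl : l < M) (h x : A) : (fwdDiff h)^[M] (fun y => φ y ^ l) x = 0 := by
  set P : Polynomial R := (.C (φ x) + .C (φ h) * .X) ^ l with hP
  have hdeg : P.natDegree < M := by
    refine lt_of_le_of_lt ?_ hl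
    rw [hP]
    compute_degree
  rw [fwdDiff_iter_congr (g := P.eval) (x' := 0) (h' := 1),
    Polynomial.fwdDiff_iter_eq_zero_of_degree_lt hdeg, Pi.zero_apply]
  intro j _
  simp only [hP, Polynomial.eval_pow, Polynomial.eval_add, Polynomial.eval_mul, Polynomial.eval_C,
    Polynomial.eval_X, map_add, map_nsmul, nsmul_eq_mul, zero_add, mul_one, mul_comm]

lemma norm_fwdDiff_iter_le_two_pow {F : Type*} [SeminormedAddCommGroup F] {h : A} (M : ℕ)
    {f : A → F} {x : A} {B : ℝ} (hB : ∀ j ≤ M, ‖f (x + j • h)‖ ≤ B) :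
    ‖(fwdDiff h)^[M] f x‖ ≤ 2 ^ M * B := by
  induction M generalizing f B with
  | zero => simpa using hB 0 le_rfl
  | succ M ih =>
    rw [Function.iterate_succ_apply, pow_succ, mul_assoc]
    refine ih fun j hj => ?_
    have hj₁ : ‖f (x + j • h + h)‖ ≤ B := by
      simpa only [add_smul, one_smul, add_assoc] using hB (j + 1) (by omega)
    calc ‖f (x + j • h + h) - f (x + j • h)‖ ≤ ‖f (x + j • h + h)‖ + ‖f (x + j • h)‖ :=
          norm_sub_le _ _
      _ ≤ 2 * B := by linarith [hB j (by omega)]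

end ForwardDifference

section Cauchy

variable {F : Type*} [NormedAddCommGroup F] [NormedSpace ℂ F] {g : ℂ → F} {c h : ℂ} {ρ δ B : ℝ}

lemma norm_fwdDiff_le_of_differentiableOn (hδ : 0 < δ) (hh : ‖h‖ ≤ δ)
    (hd : DifferentiableOn ℂ g (ball c (ρ + 2 * δ))) (hB : ∀ z ∈ ball c (ρ + 2 * δ), ‖g z‖ ≤ B)
    {z : ℂ} (hz : z ∈ ball c ρ) : ‖fwdDiff h g z‖ ≤ ‖h‖ / δ * B := by
  have hderiv : ∀ w ∈ ball c (ρ + δ), ‖deriv g w‖ ≤ B / δ := fun w hw => by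
    have hsub : closedBall w δ ⊆ ball c (ρ + 2 * δ) :=
      closedBall_subset_ball' (by linarith [mem_ball.1 hw])
    exact Complex.norm_deriv_le_of_forall_mem_sphere_norm_le hδ
      (hd.mono (closure_ball_subset_closedBall.trans hsub)).diffContOnCl
      fun v hv => hB v (hsub (sphere_subset_closedBall hv))
  have hzh : z + h ∈ ball c (ρ + δ) := by
    rw [mem_ball, dist_eq_norm] at hz ⊢
    linarith [norm_add_le (z - c) h, congrArg norm (add_sub_right_comm z h c)]
  calc ‖fwdDiff h g z‖ ≤ B / δ * ‖z + h - z‖ :=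
        (convex_ball c (ρ + δ)).norm_image_sub_le_of_norm_deriv_le
          (fun w hw => hd.differentiableAt
            (isOpen_ball.mem_nhds (ball_subset_ball (by linarith) hw)))
          hderiv (ball_subset_ball (by linarith) hz) hzh
    _ = ‖h‖ / δ * B := by rw [add_sub_cancel_left]; ring

lemma differentiableOn_fwdDiff_ball (hh : ‖h‖ ≤ δ)
    (hd : DifferentiableOn ℂ g (ball c (ρ + δ))) : DifferentiableOn ℂ (fwdDiff h g) (ball c ρ) := by
  have hδ : 0 ≤ δ := (norm_nonneg h).trans hh
  refine (hd.comp (by fun_prop) fun z hz => ?_).sub (hd.mono (ball_subset_ball (by linarith)))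
  rw [mem_ball, dist_eq_norm] at hz ⊢
  linarith [norm_add_le (z - c) h, congrArg norm (add_sub_right_comm z h c)]

lemma norm_fwdDiff_iter_le_of_differentiableOn (M : ℕ) (hδ : 0 < δ) (hh : ‖h‖ ≤ δ)
    (hd : DifferentiableOn ℂ g (ball c ((2 * M + 1) * δ)))
    (hB : ∀ z ∈ ball c ((2 * M + 1) * δ), ‖g z‖ ≤ B) :
    ‖(fwdDiff h)^[M] g c‖ ≤ (‖h‖ / δ) ^ M * B := by
  induction M generalizing g B with
  | zero => simpa using hB c (by simpa using hδ)
  | succ M ih =>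
    have hradius : (2 * (M + 1 : ℕ) + 1) * δ = (2 * M + 1) * δ + 2 * δ := by push_cast; ring
    rw [hradius] at hd hB
    rw [Function.iterate_succ_apply, pow_succ, mul_assoc]
    refine ih ?_ fun z hz => norm_fwdDiff_le_of_differentiableOn hδ hh hd hB hz
    exact differentiableOn_fwdDiff_ball hh (hd.mono (ball_subset_ball (by linarith)))

end Cauchy

/-! ### Conically holomorphic functions -/

lemma rpow_neg_le_of_le_mul {x y c e : ℝ} (hx : 0 < x) (hy : 0 < y) (hyx : y ≤ c * x)
    (he : 0 ≤ e) : x ^ (-e) ≤ c ^ e * y ^ (-e) := by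
  have hc : 0 < c := pos_of_mul_pos_left (hy.trans_le hyx) hx.le
  rw [Real.rpow_neg hx.le, Real.rpow_neg hy.le, inv_le_iff_one_le_mul₀ (by positivity),
    mul_right_comm, ← div_eq_mul_inv, one_le_div (by positivity), ← Real.mul_rpow hc.le hx.le]
  gcongr

section Conic

variable {E : Type*} [NormedAddCommGroup E] [NormedSpace ℝ E]

/-- `F` has size `B * ‖ξ‖ ^ d` and along the direction `ω` extends holomorphically, with the same
bound, to the disc of radius `η * ‖ξ‖` about `ξ`. This is an analytic form of the symbol
estimates in the direction `ω`; only the bound `B` enters the decay estimates linearly, so it is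
kept as an explicit parameter. -/
structure IsConicallyHolomorphic (F : E → ℂ) (ω : E) (η d B : ℝ) : Prop where
  norm_le : ∀ ξ, ‖F ξ‖ ≤ B * ‖ξ‖ ^ d
  exists_extension : ∀ ξ, ∃ G : ℂ → ℂ, DifferentiableOn ℂ G (ball 0 (η * ‖ξ‖)) ∧
    (∀ z ∈ ball 0 (η * ‖ξ‖), ‖G z‖ ≤ B * ‖ξ‖ ^ d) ∧
    ∀ s : ℝ, |s| < η * ‖ξ‖ → F (ξ + s • ω) = G s

namespace IsConicallyHolomorphic

variable {F : E → ℂ} {ω ξ : E} {η d B A h : ℝ}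

lemma bound_nonneg (hF : IsConicallyHolomorphic F ω η d B) (hω : ‖ω‖ = 1) : 0 ≤ B := by
  simpa [hω] using (norm_nonneg _).trans (hF.norm_le ω)

lemma norm_fwdDiff_iter_le_of_norm_le (hF : IsConicallyHolomorphic F ω η d B) (hω : ‖ω‖ = 1)
    (hd : 0 ≤ d) (hh : 0 ≤ h) (M : ℕ) (hξ : ‖ξ‖ ≤ A * h) :
    ‖(fwdDiff (h • ω))^[M] F ξ‖ ≤ 2 ^ M * (B * ((A + M) * h) ^ d) := by
  refine norm_fwdDiff_iter_le_two_pow M fun j hj => (hF.norm_le _).trans ?_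
  have hB := hF.bound_nonneg hω
  have hshift : ‖ξ + j • h • ω‖ ≤ (A + M) * h := calc
    ‖ξ + j • h • ω‖ ≤ ‖ξ‖ + ‖j • h • ω‖ := norm_add_le _ _
    _ = ‖ξ‖ + j * h := by
      rw [← Nat.cast_smul_eq_nsmul ℝ, norm_smul, norm_smul, hω, mul_one, Real.norm_natCast,
        Real.norm_of_nonneg hh]
    _ ≤ A * h + M * h := by gcongr
    _ = (A + M) * h := by ring
  gcongr

lemma norm_fwdDiff_iter_le_of_le_norm (hF : IsConicallyHolomorphic F ω η d B) (hh : 0 < h)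
    (M : ℕ) (hξ : (2 * M + 1) * h ≤ η * ‖ξ‖) :
    ‖(fwdDiff (h • ω))^[M] F ξ‖ ≤ ((2 * M + 1) * h / (η * ‖ξ‖)) ^ M * (B * ‖ξ‖ ^ d) := by
  obtain ⟨G, hG, hGB, hFG⟩ := hF.exists_extension ξ
  have hradius : (2 * M + 1) * (η * ‖ξ‖ / (2 * M + 1)) = η * ‖ξ‖ := by field_simp
  have hstep : ‖(h : ℂ)‖ ≤ η * ‖ξ‖ / (2 * M + 1) := by
    rw [Complex.norm_real, Real.norm_of_nonneg hh.le, le_div_iff₀' (by positivity)]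
    exact hξ
  have hδ : 0 < η * ‖ξ‖ / (2 * M + 1) := (by simpa using hh.ne' : 0 < ‖(h : ℂ)‖).trans_le hstep
  have hline : (fwdDiff (h • ω))^[M] F ξ = (fwdDiff (h : ℂ))^[M] G 0 := by
    refine fwdDiff_iter_congr fun j hj => ?_
    have hjM : (j : ℝ) * h ≤ M * h := by gcongr
    have hMh : 0 ≤ (M : ℝ) * h := by positivity
    have hjh : |(j : ℝ) * h| < η * ‖ξ‖ := by
      rw [abs_of_nonneg (by positivity)]
      linarith
    rw [← Nat.cast_smul_eq_nsmul ℝ, smul_smul, hFG _ hjh]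
    simp
  rw [hline]
  refine (norm_fwdDiff_iter_le_of_differentiableOn M hδ hstep (hradius.symm ▸ hG)
    (hradius.symm ▸ hGB)).trans_eq ?_
  rw [Complex.norm_real, Real.norm_of_nonneg hh.le, div_div_eq_mul_div, mul_comm h]

lemma norm_fwdDiff_iter_le_rpow_of_le (hF : IsConicallyHolomorphic F ω η d B) (hω : ‖ω‖ = 1)
    (hd : 0 ≤ d) (hh : 0 < h) {M : ℕ} (hM : d ≤ M) (hξ : ‖h⁻¹ • ξ‖ ≤ A) :
    ‖(fwdDiff (h • ω))^[M] F ξ‖ ≤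
      2 ^ M * (A + M) ^ d * (1 + A) ^ (M - d) * B * (h ^ d * (1 + ‖h⁻¹ • ξ‖) ^ (-(M - d))) := by
  have hB := hF.bound_nonneg hω
  have hA : 0 ≤ A := (norm_nonneg _).trans hξ
  have hξh : ‖ξ‖ ≤ A * h := by
    rwa [norm_smul, norm_inv, Real.norm_of_nonneg hh.le, inv_mul_le_iff₀ hh, mul_comm h] at hξ
  set t : ℝ := ‖h⁻¹ • ξ‖
  have hweight : (1 : ℝ) ≤ (1 + A) ^ (M - d) * (1 + t) ^ (-(M - d)) := by
    simpa using rpow_neg_le_of_le_mul (x := 1) (y := 1 + t) (c := 1 + A) one_pos (by positivity)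
      (by linarith) (sub_nonneg.2 hM)
  calc ‖(fwdDiff (h • ω))^[M] F ξ‖ ≤ 2 ^ M * (B * ((A + M) * h) ^ d) :=
        hF.norm_fwdDiff_iter_le_of_norm_le hω hd hh.le M hξh
    _ = 2 ^ M * (A + M) ^ d * B * h ^ d * 1 := by rw [Real.mul_rpow (by positivity) hh.le]; ring
    _ ≤ 2 ^ M * (A + M) ^ d * B * h ^ d * ((1 + A) ^ (M - d) * (1 + t) ^ (-(M - d))) := by gcongr
    _ = _ := by ring

lemma norm_fwdDiff_iter_le_rpow_of_ge (hF : IsConicallyHolomorphic F ω η d B) (hω : ‖ω‖ = 1)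
    (hη : 0 < η) (hh : 0 < h) {M : ℕ} (hM : d ≤ M) (hA : A = (2 * M + 1) / η)
    (hξ : A ≤ ‖h⁻¹ • ξ‖) :
    ‖(fwdDiff (h • ω))^[M] F ξ‖ ≤
      A ^ M * ((1 + A) / A) ^ (M - d) * B * (h ^ d * (1 + ‖h⁻¹ • ξ‖) ^ (-(M - d))) := by
  have hB := hF.bound_nonneg hω
  have hA₀ : 0 < A := hA ▸ by positivity
  have hξh : ‖ξ‖ = ‖h⁻¹ • ξ‖ * h := by
    rw [norm_smul, norm_inv, Real.norm_of_nonneg hh.le]; field_simp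
  set t : ℝ := ‖h⁻¹ • ξ‖
  have ht : 0 < t := hA₀.trans_le hξ
  have hfar : (2 * M + 1) * h ≤ η * ‖ξ‖ := by
    rw [hA, div_le_iff₀ hη] at hξ
    calc (2 * M + 1) * h ≤ t * η * h := by gcongr
      _ = η * ‖ξ‖ := by rw [hξh]; ring
  calc ‖(fwdDiff (h • ω))^[M] F ξ‖ ≤ ((2 * M + 1) * h / (η * ‖ξ‖)) ^ M * (B * ‖ξ‖ ^ d) :=
        hF.norm_fwdDiff_iter_le_of_le_norm hh M hfar
    _ = A ^ M * B * h ^ d * t ^ (-(M - d)) := by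
        rw [hξh, Real.mul_rpow ht.le hh.le, neg_sub, Real.rpow_sub ht, Real.rpow_natCast,
          show (2 * M + 1) * h / (η * (t * h)) = A / t by rw [hA]; field_simp, div_pow]
        ring
    _ ≤ A ^ M * B * h ^ d * (((1 + A) / A) ^ (M - d) * (1 + t) ^ (-(M - d))) := by
        gcongr
        refine rpow_neg_le_of_le_mul ht (by positivity) ?_ (sub_nonneg.2 hM)
        rw [div_mul_eq_mul_div, le_div_iff₀ hA₀]
        linarith
    _ = _ := by ring

lemma exists_norm_fwdDiff_iter_le_rpow (hη : 0 < η) (hd : 0 ≤ d) {M : ℕ} (hM : d ≤ M) :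
    ∃ C ≥ 0, ∀ {F : E → ℂ} {ω : E} {B : ℝ}, ‖ω‖ = 1 → IsConicallyHolomorphic F ω η d B →
      ∀ h > 0, ∀ ξ, ‖(fwdDiff (h • ω))^[M] F ξ‖ ≤
        C * B * (h ^ d * (1 + ‖h⁻¹ • ξ‖) ^ (-(M - d))) := by
  obtain ⟨A, hA⟩ : ∃ A, A = (2 * M + 1) / η := ⟨_, rfl⟩
  have hA₀ : 0 < A := hA ▸ by positivity
  refine ⟨max (2 ^ M * (A + M) ^ d * (1 + A) ^ (M - d)) (A ^ M * ((1 + A) / A) ^ (M - d)),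
    by positivity, fun {F ω B} hω hF h hh ξ => ?_⟩
  have hB := hF.bound_nonneg hω
  rcases le_total ‖h⁻¹ • ξ‖ A with hξ | hξ
  · refine (hF.norm_fwdDiff_iter_le_rpow_of_le hω hd hh hM hξ).trans ?_
    gcongr
    exact le_max_left _ _
  · refine (hF.norm_fwdDiff_iter_le_rpow_of_ge hω hη hh hM hA hξ).trans ?_
    gcongr
    exact le_max_right _ _

end IsConicallyHolomorphic

end Conic

/-! ### Decay of Fourier integrals -/

section Fourier

variable {E : Type*} [NormedAddCommGroup E] [InnerProductSpace ℝ E] [FiniteDimensional ℝ E]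
  [MeasurableSpace E] [BorelSpace E] {f : E → ℂ} {x h : E}

lemma integrable_mul_cexp_inner (hf : Integrable f) (x : E) :
    Integrable fun ξ => f ξ * Complex.exp (Complex.I * (⟪x, ξ⟫_ℝ : ℂ)) := by
  refine hf.mul_bdd (c := 1) (by fun_prop) (Filter.Eventually.of_forall fun ξ => ?_)
  rw [mul_comm, Complex.norm_exp_ofReal_mul_I]

lemma integral_fwdDiff_mul_cexp_inner (hf : Integrable f) (hxh : ⟪x, h⟫_ℝ = π) :
    ∫ ξ, fwdDiff h f ξ * Complex.exp (Complex.I * (⟪x, ξ⟫_ℝ : ℂ)) =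
      -2 * ∫ ξ, f ξ * Complex.exp (Complex.I * (⟪x, ξ⟫_ℝ : ℂ)) := by
  have hint := integrable_mul_cexp_inner hf x
  have hshift : ∀ ξ, fwdDiff h f ξ * Complex.exp (Complex.I * (⟪x, ξ⟫_ℝ : ℂ)) =
      -(f (ξ + h) * Complex.exp (Complex.I * (⟪x, ξ + h⟫_ℝ : ℂ))) -
        f ξ * Complex.exp (Complex.I * (⟪x, ξ⟫_ℝ : ℂ)) := fun ξ => by
    rw [fwdDiff, inner_add_right, hxh, Complex.ofReal_add, mul_add, Complex.exp_add,
      mul_comm Complex.I (π : ℂ), Complex.exp_pi_mul_I]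
    ring
  have hint' : Integrable fun ξ =>
      -(f (ξ + h) * Complex.exp (Complex.I * (⟪x, ξ + h⟫_ℝ : ℂ))) := (hint.comp_add_right h).neg
  simp_rw [hshift]
  rw [integral_sub hint' hint, integral_neg,
    integral_add_right_eq_self (fun ξ => f ξ * Complex.exp (Complex.I * (⟪x, ξ⟫_ℝ : ℂ))) h]
  ring

lemma integral_fwdDiff_iter_mul_cexp_inner (hf : Integrable f) (hxh : ⟪x, h⟫_ℝ = π) (M : ℕ) :
    ∫ ξ, (fwdDiff h)^[M] f ξ * Complex.exp (Complex.I * (⟪x, ξ⟫_ℝ : ℂ)) =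
      (-2) ^ M * ∫ ξ, f ξ * Complex.exp (Complex.I * (⟪x, ξ⟫_ℝ : ℂ)) := by
  induction M generalizing f with
  | zero => simp
  | succ M ih =>
    simp only [Function.iterate_succ_apply]
    rw [ih (f := fwdDiff h f) ((hf.comp_add_right h).sub hf),
      integral_fwdDiff_mul_cexp_inner hf hxh, pow_succ, mul_assoc]

lemma norm_integral_mul_cexp_inner_le (hf : Integrable f) (hxh : ⟪x, h⟫_ℝ = π) (M : ℕ) :
    ‖∫ ξ, f ξ * Complex.exp (Complex.I * (⟪x, ξ⟫_ℝ : ℂ))‖ ≤ ∫ ξ, ‖(fwdDiff h)^[M] f ξ‖ := by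
  have hpow : 1 ≤ ‖(-2 : ℂ) ^ M‖ := by simpa using one_le_pow₀ (one_le_two (α := ℝ))
  calc ‖∫ ξ, f ξ * Complex.exp (Complex.I * (⟪x, ξ⟫_ℝ : ℂ))‖
      ≤ ‖(-2 : ℂ) ^ M‖ * ‖∫ ξ, f ξ * Complex.exp (Complex.I * (⟪x, ξ⟫_ℝ : ℂ))‖ :=
        le_mul_of_one_le_left (norm_nonneg _) hpow
    _ = ‖∫ ξ, (fwdDiff h)^[M] f ξ * Complex.exp (Complex.I * (⟪x, ξ⟫_ℝ : ℂ))‖ := by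
        rw [← norm_mul, integral_fwdDiff_iter_mul_cexp_inner hf hxh]
    _ ≤ ∫ ξ, ‖(fwdDiff h)^[M] f ξ * Complex.exp (Complex.I * (⟪x, ξ⟫_ℝ : ℂ))‖ :=
        norm_integral_le_integral_norm _
    _ = ∫ ξ, ‖(fwdDiff h)^[M] f ξ‖ := by
        simp_rw [norm_mul, mul_comm Complex.I, Complex.norm_exp_ofReal_mul_I, mul_one]

lemma IsConicallyHolomorphic.exists_norm_integral_mul_cexp_inner_le {η d : ℝ} (hη : 0 < η)
    (hd : 0 ≤ d) {M : ℕ} (hM : Module.finrank ℝ E + d < M) :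
    ∃ C ≥ 0, ∀ {F P : E → ℂ} {ω : E} {B : ℝ}, ‖ω‖ = 1 → IsConicallyHolomorphic F ω η d B →
      (∀ (h : ℝ) (ξ : E), (fwdDiff (h • ω))^[M] P ξ = 0) → Integrable (F + P) → ∀ r > 0,
        ‖∫ ξ, (F + P) ξ * Complex.exp (Complex.I * (⟪r • ω, ξ⟫_ℝ : ℂ))‖ ≤
          C * B * r ^ (-(Module.finrank ℝ E : ℝ) - d) := by
  set n := Module.finrank ℝ E with hn
  obtain ⟨C, hC, hbound⟩ :=
    exists_norm_fwdDiff_iter_le_rpow (E := E) hη hd (M := M) (by linarith [n.cast_nonneg (α := ℝ)])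
  set J : ℝ := ∫ ξ : E, (1 + ‖ξ‖) ^ (-(M - d))
  have : 0 ≤ J := integral_nonneg fun ξ => by positivity
  have hweight : Integrable fun ξ : E => (1 + ‖ξ‖) ^ (-(M - d)) :=
    integrable_one_add_norm (by linarith)
  refine ⟨C * J * π ^ (d + n), by positivity, fun {F P ω B} hω hF hP hint r hr => ?_⟩
  set h : ℝ := π / r with hh
  have hh₀ : 0 < h := by positivity
  have hhalf : ⟪r • ω, h • ω⟫_ℝ = π := by
    rw [inner_smul_left, inner_smul_right, real_inner_self_eq_norm_sq, hω, hh]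
    simp only [conj_trivial]
    field_simp
  calc ‖∫ ξ, (F + P) ξ * Complex.exp (Complex.I * (⟪r • ω, ξ⟫_ℝ : ℂ))‖
      ≤ ∫ ξ, ‖(fwdDiff (h • ω))^[M] (F + P) ξ‖ := norm_integral_mul_cexp_inner_le hint hhalf M
    _ ≤ ∫ ξ, C * B * (h ^ d * (1 + ‖h⁻¹ • ξ‖) ^ (-(M - d))) := by
        refine integral_mono_of_nonneg (Filter.Eventually.of_forall fun ξ => norm_nonneg _)
          (((hweight.comp_smul (inv_ne_zero hh₀.ne')).const_mul _).const_mul _)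
          (Filter.Eventually.of_forall fun ξ => ?_)
        simpa only [fwdDiff_iter_add, Pi.add_apply, hP h ξ, add_zero] using hbound hω hF h hh₀ ξ
    _ = C * B * (h ^ d * (h ^ n * J)) := by
        rw [integral_const_mul, integral_const_mul, Measure.integral_comp_smul volume
          (fun ξ : E => (1 + ‖ξ‖) ^ (-(M - d))) h⁻¹, ← hn, inv_pow, inv_inv,
          abs_of_pos (by positivity), smul_eq_mul]
    _ = C * J * π ^ (d + n) * B * r ^ (-(n : ℝ) - d) := by
        rw [hh, ← Real.rpow_natCast (π / r) n, Real.div_rpow pi_pos.le hr.le,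
          Real.div_rpow pi_pos.le hr.le, Real.rpow_add pi_pos,
          show -(n : ℝ) - d = -(n + d) by ring, Real.rpow_neg hr.le, Real.rpow_add hr]
        field_simp

end Fourier

/-! ### Radial multipliers -/

section Radial

lemma exists_forall_cpow_re_pos_norm_le_two (s : ℝ) :
    ∃ δ ∈ Ioo (0 : ℝ) 1, ∀ w : ℂ, ‖w - 1‖ < δ →
      0 < w.re ∧ 0 < (w ^ (s : ℂ)).re ∧ ‖w ^ (s : ℂ)‖ ≤ 2 := by
  have hcont : ContinuousAt (fun w : ℂ => w ^ (s : ℂ)) 1 :=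
    (differentiableAt_id.cpow_const Complex.one_mem_slitPlane).continuousAt
  have hre₁ : ∀ᶠ w : ℂ in nhds 1, 0 < w.re :=
    Complex.continuous_re.continuousAt.eventually (lt_mem_nhds (by simp))
  have hre : ∀ᶠ w : ℂ in nhds 1, 0 < (w ^ (s : ℂ)).re :=
    (Complex.continuous_re.continuousAt.comp hcont).eventually (lt_mem_nhds (by simp))
  have hnorm : ∀ᶠ w : ℂ in nhds 1, ‖w ^ (s : ℂ)‖ < 2 :=
    hcont.norm.eventually (gt_mem_nhds (by simp))
  obtain ⟨δ, hδ, hball⟩ := Metric.eventually_nhds_iff.1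
    (hre₁.and (hre.and hnorm))
  refine ⟨min δ (1 / 2), ⟨by positivity, (min_le_right _ _).trans_lt (by norm_num)⟩,
    fun w hw => ?_⟩
  obtain ⟨hw₁, hw₂, hw₃⟩ := hball (y := w) (by
    rw [dist_eq_norm]; exact hw.trans_le (min_le_left _ _))
  exact ⟨hw₁, hw₂, hw₃.le⟩

variable {g : ℂ → ℂ} {K p σ R : ℝ}

lemma norm_mul_I_mul_pow_le (hg : ∀ u : ℂ, 0 ≤ u.re → ‖g u‖ ≤ K * ‖u‖ ^ p) (hp : 0 ≤ p)
    (hσ : 0 ≤ σ) (hR : 0 ≤ R) (l : ℕ) {u v : ℂ} (hre : 0 ≤ u.re) (hu : ‖u‖ ≤ 2 * R ^ σ)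
    (hv : ‖v‖ ≤ 2 * R) : ‖g u * (Complex.I * v) ^ l‖ ≤ K * 2 ^ (p + l) * R ^ (σ * p + l) := by
  have hK : 0 ≤ K := by simpa using (norm_nonneg _).trans (hg 1 (by simp))
  calc ‖g u * (Complex.I * v) ^ l‖ = ‖g u‖ * ‖v‖ ^ l := by simp
    _ ≤ K * (2 * R ^ σ) ^ p * (2 * R) ^ l := by
        gcongr
        exact (hg u hre).trans (by gcongr)
    _ = K * 2 ^ (p + l) * R ^ (σ * p + l) := by
        rw [Real.mul_rpow zero_le_two (by positivity), ← Real.rpow_mul hR, mul_pow,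
          Real.rpow_add two_pos, Real.rpow_add_of_nonneg hR (by positivity) l.cast_nonneg,
          Real.rpow_natCast, Real.rpow_natCast]
        ring

variable {E : Type*} [NormedAddCommGroup E] [InnerProductSpace ℝ E]

lemma fwdDiff_iter_I_mul_inner_pow_eq_zero {l M : ℕ} (hl : l < M) (ω h ξ : E) :
    (fwdDiff h)^[M] (fun ξ => (Complex.I * ⟪ω, ξ⟫_ℝ) ^ l) ξ = 0 :=
  fwdDiff_iter_addMonoidHom_pow_eq_zero
    (AddMonoidHom.mk' (fun ξ : E => Complex.I * (⟪ω, ξ⟫_ℝ : ℂ)) fun ξ₁ ξ₂ => by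
      rw [inner_add_right, Complex.ofReal_add, mul_add]) hl h ξ

lemma norm_add_smul_rpow {ω ξ : E} (hω : ‖ω‖ = 1) (hξ : ξ ≠ 0) (σ s : ℝ) :
    ‖ξ + s • ω‖ ^ σ = ‖ξ‖ ^ σ * (1 + (2 * ⟪ω, ξ⟫_ℝ * s + s ^ 2) / ‖ξ‖ ^ 2) ^ (σ / 2) := by
  have hξ₀ : ‖ξ‖ ≠ 0 := norm_ne_zero_iff.2 hξ
  have hsq : 1 + (2 * ⟪ω, ξ⟫_ℝ * s + s ^ 2) / ‖ξ‖ ^ 2 = (‖ξ + s • ω‖ / ‖ξ‖) ^ 2 := by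
    rw [div_pow, norm_add_sq_real, inner_smul_right, norm_smul, hω, mul_one, Real.norm_eq_abs,
      sq_abs, real_inner_comm]
    field_simp
    ring
  rw [hsq, ← Real.rpow_natCast, ← Real.rpow_mul (by positivity), Nat.cast_ofNat,
    mul_div_cancel₀ σ two_ne_zero, Real.div_rpow (norm_nonneg _) (norm_nonneg _),
    mul_div_cancel₀ _ (by positivity)]

lemma norm_quadratic_div_sq_lt {δ R t : ℝ} (hδ : δ ≤ 1) (hR : 0 < R) (ht : |t| ≤ R) {z : ℂ}
    (hz : ‖z‖ < δ / 3 * R) : ‖(2 * t * z + z ^ 2) / (R : ℂ) ^ 2‖ < δ := by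
  have hzR : ‖z‖ ≤ R := by nlinarith
  rw [norm_div, norm_pow, Complex.norm_real, Real.norm_of_nonneg hR.le, div_lt_iff₀ (by positivity)]
  calc ‖2 * t * z + z ^ 2‖ ≤ ‖2 * t * z‖ + ‖z ^ 2‖ := norm_add_le _ _
    _ = (2 * |t| + ‖z‖) * ‖z‖ := by simp; ring
    _ ≤ (2 * R + R) * ‖z‖ := by gcongr
    _ < (2 * R + R) * (δ / 3 * R) := by gcongr
    _ = δ * R ^ 2 := by ring

lemma exists_holomorphic_extension_norm_rpow (σ : ℝ) :
    ∃ η ∈ Ioo (0 : ℝ) 1, ∀ {ω ξ : E}, ‖ω‖ = 1 → ∃ u : ℂ → ℂ,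
      DifferentiableOn ℂ u (ball 0 (η * ‖ξ‖)) ∧
      (∀ z ∈ ball (0 : ℂ) (η * ‖ξ‖), 0 < (u z).re ∧ ‖u z‖ ≤ 2 * ‖ξ‖ ^ σ) ∧
      ∀ s : ℝ, |s| < η * ‖ξ‖ → ((‖ξ + s • ω‖ ^ σ : ℝ) : ℂ) = u s := by
  obtain ⟨δ, ⟨hδ₀, hδ₁⟩, hδ⟩ := exists_forall_cpow_re_pos_norm_le_two (σ / 2)
  refine ⟨δ / 3, ⟨by positivity, by linarith⟩, fun {ω ξ} hω => ?_⟩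
  rcases eq_or_ne ξ 0 with rfl | hξ
  · exact ⟨0, by simp⟩
  have hinner : |⟪ω, ξ⟫_ℝ| ≤ ‖ξ‖ := by simpa [hω] using abs_real_inner_le_norm ω ξ
  have hR : 0 < ‖ξ‖ := norm_pos_iff.2 hξ
  have hRσ : 0 < ‖ξ‖ ^ σ := by positivity
  let w (z : ℂ) : ℂ := 1 + (2 * ⟪ω, ξ⟫_ℝ * z + z ^ 2) / (‖ξ‖ : ℂ) ^ 2
  have hw : ∀ z ∈ ball (0 : ℂ) (δ / 3 * ‖ξ‖), ‖w z - 1‖ < δ := fun z hz => by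
    simpa only [w, add_sub_cancel_left] using
      norm_quadratic_div_sq_lt hδ₁.le hR hinner (mem_ball_zero_iff.1 hz)
  refine ⟨fun z => (‖ξ‖ ^ σ : ℝ) * w z ^ ((σ / 2 : ℝ) : ℂ), fun z hz => ?_, fun z hz => ⟨?_, ?_⟩,
    fun s hs => ?_⟩
  · exact ((DifferentiableAt.cpow_const (by fun_prop) (.inl (hδ _ (hw z hz)).1)).const_mul
      _).differentiableWithinAt
  · simpa only [Complex.re_ofReal_mul] using mul_pos hRσ (hδ _ (hw z hz)).2.1
  · rw [norm_mul, Complex.norm_real, Real.norm_of_nonneg hRσ.le, mul_comm 2]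
    gcongr
    exact (hδ _ (hw z hz)).2.2
  · have hws : 0 < (w s).re := (hδ _ (hw s (by simpa using hs))).1
    have hwr : w s = (1 + (2 * ⟪ω, ξ⟫_ℝ * s + s ^ 2) / ‖ξ‖ ^ 2 : ℝ) := by push_cast; rfl
    rw [hwr, Complex.ofReal_re] at hws
    rw [norm_add_smul_rpow hω hξ, Complex.ofReal_mul, Complex.ofReal_cpow hws.le, ← hwr]

lemma exists_isConicallyHolomorphic_radial_mul_inner_pow (hσ : 0 ≤ σ) :
    ∃ η > 0, ∀ {g : ℂ → ℂ} {K p : ℝ}, DifferentiableOn ℂ g {u | 0 < u.re} →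
      (∀ u : ℂ, 0 ≤ u.re → ‖g u‖ ≤ K * ‖u‖ ^ p) → 0 ≤ p → ∀ (l : ℕ) {ω : E}, ‖ω‖ = 1 →
        IsConicallyHolomorphic (fun ξ => g (‖ξ‖ ^ σ : ℝ) * (Complex.I * ⟪ω, ξ⟫_ℝ) ^ l)
          ω η (σ * p + l) (K * 2 ^ (p + l)) := by
  obtain ⟨η, ⟨hη₀, hη₁⟩, hη⟩ := exists_holomorphic_extension_norm_rpow (E := E) σ
  refine ⟨η, hη₀, fun {g K p} hg hgK hp l ω hω => ⟨fun ξ => ?_, fun ξ => ?_⟩⟩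
  all_goals have hinner : |⟪ω, ξ⟫_ℝ| ≤ ‖ξ‖ := by simpa [hω] using abs_real_inner_le_norm ω ξ
  · have hpow : 0 ≤ ‖ξ‖ ^ σ := by positivity
    refine norm_mul_I_mul_pow_le hgK hp hσ (norm_nonneg ξ) l (by simpa) ?_ ?_
    · rw [Complex.norm_real, Real.norm_of_nonneg hpow]; linarith
    · rw [Complex.norm_real, Real.norm_eq_abs]; linarith [norm_nonneg ξ]
  · obtain ⟨u, hu, hu_bound, hu_eq⟩ := hη (ξ := ξ) hω
    refine ⟨fun z => g (u z) * (Complex.I * (⟪ω, ξ⟫_ℝ + z)) ^ l,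
      (hg.comp hu fun z hz => (hu_bound z hz).1).mul (by fun_prop), fun z hz => ?_, fun s hs => ?_⟩
    · refine norm_mul_I_mul_pow_le hgK hp hσ (norm_nonneg ξ) l (hu_bound z hz).1.le
        (hu_bound z hz).2 ?_
      have hz' : ‖z‖ ≤ ‖ξ‖ := by nlinarith [mem_ball_zero_iff.1 hz, norm_nonneg ξ]
      calc ‖(⟪ω, ξ⟫_ℝ : ℂ) + z‖ ≤ |⟪ω, ξ⟫_ℝ| + ‖z‖ := by
            simpa using norm_add_le (⟪ω, ξ⟫_ℝ : ℂ) z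
        _ ≤ 2 * ‖ξ‖ := by linarith
    · simp only [hu_eq s hs, inner_add_right, inner_smul_right, real_inner_self_eq_norm_sq, hω]
      simp

lemma norm_pow_mul_exp_neg_sub_zero_pow_le (k : ℕ) {u : ℂ} (hu : 0 ≤ u.re) :
    ‖u ^ k * Complex.exp (-u) - 0 ^ k‖ ≤ 2 * ‖u‖ ^ max k 1 := by
  have hexp : ‖Complex.exp (-u)‖ ≤ 1 := by simpa [Complex.norm_exp] using hu
  rcases k.eq_zero_or_pos with rfl | hk
  · simp only [pow_zero, one_mul, zero_le, sup_of_le_right, pow_one]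
    rcases le_total ‖u‖ 1 with hu₁ | hu₁
    · simpa using Complex.norm_exp_sub_one_le (x := -u) (by rwa [norm_neg])
    · calc ‖Complex.exp (-u) - 1‖ ≤ ‖Complex.exp (-u)‖ + ‖(1 : ℂ)‖ := norm_sub_le _ _
        _ ≤ 2 * ‖u‖ := by rw [norm_one]; linarith
  · rw [zero_pow hk.ne', sub_zero, norm_mul, norm_pow, max_eq_left hk]
    calc ‖u‖ ^ k * ‖Complex.exp (-u)‖ ≤ ‖u‖ ^ k * 2 := by gcongr; linarith
      _ = 2 * ‖u‖ ^ k := mul_comm _ _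

end Radial

/-! ### Elliptic symbols -/

/-- A Fourier multiplier comparable to, and homogeneous like, the symbol `‖ξ‖ ^ σ` of a
fractional Laplacian; no regularity is required of it on the unit sphere. -/
structure IsEllipticSymbol {E : Type*} [NormedAddCommGroup E] [NormedSpace ℝ E]
    [MeasurableSpace E] (m : E → ℝ) (σ c₁ c₂ : ℝ) : Prop where
  exponent_pos : 0 < σ
  lower_pos : 0 < c₁
  measurable : Measurable m
  map_smul : ∀ ξ, ∀ s, 0 ≤ s → m (s • ξ) = s ^ σ * m ξ
  lower_le : ∀ ξ, c₁ * ‖ξ‖ ^ σ ≤ m ξ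
  le_upper : ∀ ξ, m ξ ≤ c₂ * ‖ξ‖ ^ σ

section EllipticSymbol

variable {E : Type*} [NormedAddCommGroup E] [InnerProductSpace ℝ E] [MeasurableSpace E]
  {m : E → ℝ} {σ c₁ c₂ : ℝ}

lemma IsEllipticSymbol.nonneg (hm : IsEllipticSymbol m σ c₁ c₂) (ξ : E) : 0 ≤ m ξ :=
  (mul_nonneg hm.lower_pos.le (by positivity)).trans (hm.lower_le ξ)

variable [BorelSpace E]

lemma isEllipticSymbol_const_mul_norm_rpow {a : ℝ} (hσ : 0 < σ) (ha : 0 < a) :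
    IsEllipticSymbol (fun ξ : E => a * ‖ξ‖ ^ σ) σ a a where
  exponent_pos := hσ
  lower_pos := ha
  measurable := by fun_prop
  map_smul ξ s hs := by
    rw [norm_smul, Real.norm_of_nonneg hs, Real.mul_rpow hs (norm_nonneg ξ), mul_left_comm]
  lower_le _ := le_rfl
  le_upper _ := le_rfl

variable [FiniteDimensional ℝ E]

/-- The `l`-th derivative at `s = r` of `s ↦ ∫ m ^ k * exp (-m) * exp (i ⟪s • ω, ·⟫)`, the
unnormalised inverse Fourier transform along the ray through `ω`. -/
def heatRayIntegral (m : E → ℝ) (k l : ℕ) (r : ℝ) (ω : E) : ℂ :=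
  ∫ ξ, ((m ξ ^ k * Real.exp (-m ξ) : ℝ) : ℂ) * (Complex.I * ⟪ω, ξ⟫_ℝ) ^ l *
    Complex.exp (Complex.I * (⟪r • ω, ξ⟫_ℝ : ℂ))

variable [Nontrivial E]

lemma integrable_norm_rpow_pow_mul_exp_mul_norm_pow {c : ℝ} (hσ : 0 < σ)
    (hc : 0 < c) (C : ℝ) (k l : ℕ) :
    Integrable fun ξ : E => (C * ‖ξ‖ ^ σ) ^ k * Real.exp (-(c * ‖ξ‖ ^ σ)) * ‖ξ‖ ^ l := by
  rw [integrable_fun_norm_addHaar volume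
    (f := fun y : ℝ => (C * y ^ σ) ^ k * Real.exp (-(c * y ^ σ)) * y ^ l)]
  set n := Module.finrank ℝ E - 1
  have hexponent : (-1 : ℝ) < n + σ * k + l := neg_one_lt_zero.trans_le (by positivity)
  refine IntegrableOn.congr_fun ((integrableOn_rpow_mul_exp_neg_mul_rpow hexponent hσ hc).const_mul
    (C ^ k)) (fun y (hy : 0 < y) => ?_) measurableSet_Ioi
  simp only [smul_eq_mul]
  rw [Real.rpow_add hy, Real.rpow_add hy, Real.rpow_mul hy.le, Real.rpow_natCast,
    Real.rpow_natCast, Real.rpow_natCast, mul_pow, neg_mul]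
  ring

namespace IsEllipticSymbol

lemma integrable_pow_mul_exp_mul_norm_pow (hm : IsEllipticSymbol m σ c₁ c₂) (k l : ℕ) :
    Integrable fun ξ => m ξ ^ k * Real.exp (-m ξ) * ‖ξ‖ ^ l := by
  have hmeas := hm.measurable
  refine (integrable_norm_rpow_pow_mul_exp_mul_norm_pow hm.exponent_pos hm.lower_pos c₂ k l).mono'
    (by fun_prop) (Filter.Eventually.of_forall fun ξ => ?_)
  have hξ := hm.nonneg ξ
  rw [Real.norm_of_nonneg (by positivity)]
  have hξ' : 0 ≤ c₂ * ‖ξ‖ ^ σ := hξ.trans (hm.le_upper ξ)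
  gcongr
  · exact hm.le_upper ξ
  · exact hm.lower_le ξ

lemma integrable_pow_mul_exp_mul_inner_pow (hm : IsEllipticSymbol m σ c₁ c₂) (k l : ℕ) (ω : E) :
    Integrable fun ξ =>
      ((m ξ ^ k * Real.exp (-m ξ) : ℝ) : ℂ) * (Complex.I * ⟪ω, ξ⟫_ℝ) ^ l := by
  have hmeas := hm.measurable
  refine ((hm.integrable_pow_mul_exp_mul_norm_pow k l).const_mul (‖ω‖ ^ l)).mono'
    (by fun_prop) (Filter.Eventually.of_forall fun ξ => ?_)
  have hξ := hm.nonneg ξ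
  calc ‖((m ξ ^ k * Real.exp (-m ξ) : ℝ) : ℂ) * (Complex.I * ⟪ω, ξ⟫_ℝ) ^ l‖
      = m ξ ^ k * Real.exp (-m ξ) * |⟪ω, ξ⟫_ℝ| ^ l := by
        rw [norm_mul, Complex.norm_real, Real.norm_of_nonneg (by positivity), norm_pow, norm_mul,
          Complex.norm_I, one_mul, Complex.norm_real, Real.norm_eq_abs]
    _ ≤ m ξ ^ k * Real.exp (-m ξ) * (‖ω‖ * ‖ξ‖) ^ l := by
        gcongr
        exact abs_real_inner_le_norm ω ξ
    _ = ‖ω‖ ^ l * (m ξ ^ k * Real.exp (-m ξ) * ‖ξ‖ ^ l) := by ring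

end IsEllipticSymbol

lemma exists_norm_heatRayIntegral_radial_le (hσ : 0 < σ) (k l : ℕ) :
    ∃ C ≥ 0, ∀ a > 0, ∀ ω : E, ‖ω‖ = 1 → ∀ r > 0,
      ‖heatRayIntegral (fun ξ : E => a * ‖ξ‖ ^ σ) k l r ω‖ ≤
        C * a ^ max k 1 * r ^ (-(Module.finrank ℝ E : ℝ) - (σ * (max k 1 : ℕ) + l)) := by
  obtain ⟨η, hη, hconic⟩ := exists_isConicallyHolomorphic_radial_mul_inner_pow (E := E) hσ.le
  set p := max k 1
  obtain ⟨M, hM⟩ := exists_nat_gt (Module.finrank ℝ E + (σ * p + l))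
  have hlM : l < M := by
    have : (l : ℝ) ≤ Module.finrank ℝ E + (σ * p + l) := by
      rw [← add_assoc]; exact le_add_of_nonneg_left (by positivity)
    exact_mod_cast this.trans_lt hM
  obtain ⟨C, hC, hdecay⟩ :=
    IsConicallyHolomorphic.exists_norm_integral_mul_cexp_inner_le (E := E) hη (by positivity) hM
  refine ⟨C * (2 * 2 ^ ((p : ℝ) + l)), by positivity, fun a ha ω hω r hr => ?_⟩
  let g (u : ℂ) : ℂ := (a * u) ^ k * Complex.exp (-(a * u)) - 0 ^ k
  have hg : ∀ u : ℂ, 0 ≤ u.re → ‖g u‖ ≤ 2 * a ^ p * ‖u‖ ^ (p : ℝ) := fun u hu => by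
    refine (norm_pow_mul_exp_neg_sub_zero_pow_le k (u := a * u) ?_).trans_eq ?_
    · rw [Complex.re_ofReal_mul]; positivity
    · rw [norm_mul, Complex.norm_real, Real.norm_of_nonneg ha.le, Real.rpow_natCast]; ring
  have hF := hconic (g := g) (by fun_prop) hg (by positivity) l hω
  let P : E → ℂ := (0 : ℂ) ^ k • fun ξ => (Complex.I * ⟪ω, ξ⟫_ℝ) ^ l
  have hP : ∀ (h : ℝ) (ξ : E), (fwdDiff (h • ω))^[M] P ξ = 0 := fun h ξ => by
    rw [fwdDiff_iter_const_smul, Pi.smul_apply, fwdDiff_iter_I_mul_inner_pow_eq_zero hlM,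
      smul_zero]
  have hsplit : ∀ ξ : E, (((a * ‖ξ‖ ^ σ) ^ k * Real.exp (-(a * ‖ξ‖ ^ σ)) : ℝ) : ℂ) *
      (Complex.I * ⟪ω, ξ⟫_ℝ) ^ l =
        ((fun ξ => g (‖ξ‖ ^ σ : ℝ) * (Complex.I * ⟪ω, ξ⟫_ℝ) ^ l) + P) ξ := fun ξ => by
    simp only [g, P, Pi.add_apply, Pi.smul_apply, smul_eq_mul]; push_cast; ring
  have hint := (isEllipticSymbol_const_mul_norm_rpow (E := E) hσ
    ha).integrable_pow_mul_exp_mul_inner_pow k l ω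
  simp_rw [heatRayIntegral, hsplit] at hint ⊢
  refine (hdecay hω hF hP hint r hr).trans_eq ?_
  ring

end EllipticSymbol

/-! ### Averaging over the sphere -/

lemma integral_integral_prod_swap {X Y F : Type*} [MeasurableSpace X] [MeasurableSpace Y]
    [NormedAddCommGroup F] [NormedSpace ℝ F] {ν : Measure X} {ρ : Measure Y} [SFinite ν]
    [SFinite ρ] {H : X → X → Y → F}
    (hH : Integrable (fun q : X × X × Y => H q.1 q.2.1 q.2.2) (ν.prod (ν.prod ρ))) :
    ∫ x, ∫ p : X × Y, H x p.1 p.2 ∂(ν.prod ρ) ∂ν =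
      ∫ x, ∫ p : X × Y, H p.1 x p.2 ∂(ν.prod ρ) ∂ν := by
  let e : X × X × Y ≃ᵐ X × X × Y := MeasurableEquiv.prodAssoc.symm.trans
    ((MeasurableEquiv.prodCongr MeasurableEquiv.prodComm (MeasurableEquiv.refl Y)).trans
      MeasurableEquiv.prodAssoc)
  have he : MeasurePreserving e (ν.prod (ν.prod ρ)) (ν.prod (ν.prod ρ)) :=
    (measurePreserving_prodAssoc ν ν ρ).comp
      ((Measure.measurePreserving_swap.prod (MeasurePreserving.id ρ)).comp
        ((measurePreserving_prodAssoc ν ν ρ).symm MeasurableEquiv.prodAssoc))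
  have hH' : Integrable (fun q : X × X × Y => H q.2.1 q.1 q.2.2) (ν.prod (ν.prod ρ)) :=
    (he.integrable_comp_emb e.measurableEmbedding).2 hH
  rw [← integral_prod (fun q : X × X × Y => H q.1 q.2.1 q.2.2) hH,
    ← integral_prod (fun q : X × X × Y => H q.2.1 q.1 q.2.2) hH']
  exact (he.integral_comp' fun q : X × X × Y => H q.1 q.2.1 q.2.2).symm

section Polar

variable {E : Type*} [NormedAddCommGroup E] [InnerProductSpace ℝ E] [FiniteDimensional ℝ E]
  [MeasurableSpace E] [BorelSpace E]

lemma measurableEmbedding_smul_sphere :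
    MeasurableEmbedding fun p : sphere (0 : E) 1 × Ioi (0 : ℝ) => (p.2 : ℝ) • (p.1 : E) :=
  (MeasurableEmbedding.subtype_coe (measurableSet_singleton (0 : E)).compl).comp
    (homeomorphUnitSphereProd E).symm.measurableEmbedding

variable [Nontrivial E]

lemma measurePreserving_smul_sphere :
    MeasurePreserving (fun p : sphere (0 : E) 1 × Ioi (0 : ℝ) => (p.2 : ℝ) • (p.1 : E))
      ((volume : Measure E).toSphere.prod (Measure.volumeIoiPow (Module.finrank ℝ E - 1)))
      volume := by
  have hpolar := (volume : Measure E).measurePreserving_homeomorphUnitSphereProd.symm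
    (homeomorphUnitSphereProd E).toMeasurableEquiv
  have hcoe := measurePreserving_subtype_coe (μa := (volume : Measure E))
    (measurableSet_singleton (0 : E)).compl
  rw [restrict_compl_singleton] at hcoe
  exact hcoe.comp hpolar

lemma integral_sphere_integral_mul_inner {w : E → ℂ} {K : ℝ → ℂ}
    (hint : Integrable (fun p : sphere (0 : E) 1 × E => w p.2 * K ⟪(p.1 : E), p.2⟫_ℝ)
      ((volume : Measure E).toSphere.prod volume)) :
    ∫ θ : sphere (0 : E) 1, (∫ ξ, w ξ * K ⟪(θ : E), ξ⟫_ℝ) ∂(volume : Measure E).toSphere =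
      ∫ ω : sphere (0 : E) 1, (∫ ξ, w (‖ξ‖ • (ω : E)) * K ⟪(ω : E), ξ⟫_ℝ)
        ∂(volume : Measure E).toSphere := by
  have hpolar := measurePreserving_smul_sphere (E := E)
  have hemb := measurableEmbedding_smul_sphere (E := E)
  let H (θ ω : sphere (0 : E) 1) (s : Ioi (0 : ℝ)) : ℂ :=
    w ((s : ℝ) • (ω : E)) * K ⟪(θ : E), (s : ℝ) • (ω : E)⟫_ℝ
  have hH := (((MeasurePreserving.id _).prod hpolar).integrable_comp_emb
    (MeasurableEmbedding.id.prodMap hemb)).2 hint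
  have hfrozen : ∀ (θ ω : sphere (0 : E) 1) (s : Ioi (0 : ℝ)), H θ ω s =
      w (‖(s : ℝ) • (θ : E)‖ • (ω : E)) * K ⟪(ω : E), (s : ℝ) • (θ : E)⟫_ℝ := fun θ ω s => by
    have hs : ‖(s : ℝ) • (θ : E)‖ = s := by
      rw [norm_smul, norm_eq_of_mem_sphere, mul_one, Real.norm_of_nonneg s.2.le]
    simp only [H, hs, inner_smul_right, real_inner_comm]
  simp_rw [← hpolar.integral_comp hemb, ← hfrozen]
  exact integral_integral_prod_swap (H := H) hH

end Polar

/-! ### Directional derivatives -/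

section Derivative

variable {E : Type*} [NormedAddCommGroup E] [InnerProductSpace ℝ E]

/-- The pairing `(ξ, s) ↦ -(2π)⁻¹ s ⟪ω, ξ⟫`, normalised so that the library's Fourier integral
along it is `s ↦ ∫ f ξ * exp (i ⟪s • ω, ξ⟫)`. -/
def rayPairing (ω : E) : E →L[ℝ] ℝ →L[ℝ] ℝ :=
  (ContinuousLinearMap.mul ℝ ℝ).comp ((-(2 * π)⁻¹) • innerSL ℝ ω)

lemma rayPairing_apply (ω ξ : E) (s : ℝ) : rayPairing ω ξ s = -(2 * π)⁻¹ * ⟪ω, ξ⟫_ℝ * s := rfl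

variable [FiniteDimensional ℝ E] [MeasurableSpace E] [BorelSpace E] {f : E → ℂ}

lemma fourierIntegral_rayPairing (ω : E) (f : E → ℂ) (s : ℝ) :
    VectorFourier.fourierIntegral fourierChar volume (rayPairing ω).toLinearMap₁₂ f s =
      ∫ ξ, f ξ * Complex.exp (Complex.I * (⟪s • ω, ξ⟫_ℝ : ℂ)) := by
  refine integral_congr_ae (.of_forall fun ξ => ?_)
  have hphase : 2 * π * -rayPairing ω ξ s = ⟪s • ω, ξ⟫_ℝ := by
    rw [rayPairing_apply, real_inner_smul_left]; field_simp
  change (fourierChar (-rayPairing ω ξ s) : Circle) • f ξ = _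
  simp only [Circle.smul_def, Real.fourierChar_apply, hphase, smul_eq_mul]
  rw [mul_comm, mul_comm Complex.I]

lemma contDiff_integral_mul_cexp_inner (hf : ∀ n : ℕ, Integrable fun ξ => ‖ξ‖ ^ n * ‖f ξ‖)
    (ω : E) (l : ℕ) :
    ContDiff ℝ l fun s : ℝ => ∫ ξ, f ξ * Complex.exp (Complex.I * (⟪s • ω, ξ⟫_ℝ : ℂ)) := by
  simp_rw [← fourierIntegral_rayPairing]
  exact VectorFourier.contDiff_fourierIntegral (rayPairing ω) (N := l) fun n _ => hf n

lemma iteratedDeriv_integral_mul_cexp_inner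
    (hf : ∀ n : ℕ, Integrable fun ξ => ‖ξ‖ ^ n * ‖f ξ‖) (hfm : AEStronglyMeasurable f) (ω : E)
    (l : ℕ) (s : ℝ) :
    iteratedDeriv l (fun s : ℝ => ∫ ξ, f ξ * Complex.exp (Complex.I * (⟪s • ω, ξ⟫_ℝ : ℂ))) s =
      ∫ ξ, f ξ * (Complex.I * ⟪ω, ξ⟫_ℝ) ^ l * Complex.exp (Complex.I * (⟪s • ω, ξ⟫_ℝ : ℂ)) := by
  have hderiv := VectorFourier.iteratedFDeriv_fourierIntegral (rayPairing ω) (N := l)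
    (fun n _ => hf n) hfm le_rfl
  have hfactor : ∀ ξ, VectorFourier.fourierPowSMulRight (rayPairing ω) f ξ l (fun _ => 1) =
      f ξ * (Complex.I * ⟪ω, ξ⟫_ℝ) ^ l := fun ξ => by
    have hbase : -(2 * π * Complex.I) * (rayPairing ω ξ 1 : ℝ) = Complex.I * ⟪ω, ξ⟫_ℝ := by
      rw [rayPairing_apply]; push_cast; field_simp
    rw [VectorFourier.fourierPowSMulRight_apply, Finset.prod_const, Finset.card_univ,
      Fintype.card_fin, ← hbase, mul_pow, Complex.real_smul, smul_eq_mul, Complex.ofReal_pow]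
    ring
  simp_rw [← fourierIntegral_rayPairing, ← hfactor]
  rw [iteratedDeriv_eq_iteratedFDeriv, hderiv,
    Real.fourierIntegral_continuousMultilinearMap_apply'
      (VectorFourier.integrable_fourierPowSMulRight _ (hf l) hfm)]

end Derivative

/-! ### Spherical averages of heat profiles -/

section HeatProfile

variable {E : Type*} [NormedAddCommGroup E] [InnerProductSpace ℝ E] [FiniteDimensional ℝ E]
  [MeasurableSpace E] [BorelSpace E] {m : E → ℝ} {σ c₁ c₂ : ℝ}

/-- The inverse Fourier transform of `m ^ k * exp (-m)`, i.e. the `k`-th power of the operator with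
symbol `m` applied to its heat kernel at time one. The real part is taken to get a real-valued
function, as in `LkPhi`. -/
def heatProfile (m : E → ℝ) (k : ℕ) (x : E) : ℝ :=
  (2 * π) ^ (-(Module.finrank ℝ E : ℝ)) *
    (∫ ξ, ((m ξ ^ k * Real.exp (-m ξ) : ℝ) : ℂ) * Complex.exp (Complex.I * (⟪x, ξ⟫_ℝ : ℂ))).re

namespace IsEllipticSymbol

variable [Nontrivial E]

lemma iteratedDeriv_heatProfile_smul (hm : IsEllipticSymbol m σ c₁ c₂) (k l : ℕ) (θ : E) (r : ℝ) :
    iteratedDeriv l (fun s : ℝ => heatProfile m k (s • θ)) r =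
      (2 * π) ^ (-(Module.finrank ℝ E : ℝ)) * (heatRayIntegral m k l r θ).re := by
  have hmeas := hm.measurable
  have hmoments : ∀ n : ℕ, Integrable fun ξ =>
      ‖ξ‖ ^ n * ‖((m ξ ^ k * Real.exp (-m ξ) : ℝ) : ℂ)‖ := fun n => by
    refine (hm.integrable_pow_mul_exp_mul_norm_pow k n).congr (.of_forall fun ξ => ?_)
    have hξ := hm.nonneg ξ
    simp only [Complex.norm_real, mul_comm (‖ξ‖ ^ n)]
    rw [Real.norm_of_nonneg (by positivity)]
  have hderiv := iteratedDeriv_integral_mul_cexp_inner hmoments (by fun_prop) θ l r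
  have hsmooth := (contDiff_integral_mul_cexp_inner hmoments θ l).contDiffAt (x := r)
  unfold heatProfile heatRayIntegral
  rw [iteratedDeriv_const_mul_field, ← hderiv]
  congr 1
  simp only [iteratedDeriv_eq_iteratedFDeriv]
  exact congrArg (· fun _ => 1)
    (Complex.reCLM.iteratedFDeriv_comp_left hsmooth (i := l) le_rfl)

lemma integrable_sphere_prod (hm : IsEllipticSymbol m σ c₁ c₂) (k l : ℕ) (r : ℝ) :
    Integrable (fun p : sphere (0 : E) 1 × E => ((m p.2 ^ k * Real.exp (-m p.2) : ℝ) : ℂ) *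
      ((Complex.I * ⟪(p.1 : E), p.2⟫_ℝ) ^ l *
        Complex.exp (Complex.I * ((r * ⟪(p.1 : E), p.2⟫_ℝ : ℝ) : ℂ))))
      ((volume : Measure E).toSphere.prod volume) := by
  have hmeas := hm.measurable
  refine ((hm.integrable_pow_mul_exp_mul_norm_pow k l).comp_snd
    (volume : Measure E).toSphere).mono' ?_ (.of_forall fun p => ?_)
  · have : Measurable fun p : sphere (0 : E) 1 × E => ⟪(p.1 : E), p.2⟫_ℝ :=
      Continuous.measurable (by fun_prop)
    fun_prop
  · have hp := hm.nonneg p.2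
    have hinner : |⟪(p.1 : E), p.2⟫_ℝ| ≤ ‖p.2‖ := by
      simpa using abs_real_inner_le_norm (p.1 : E) p.2
    rw [norm_mul, norm_mul, mul_comm Complex.I ((r * _ : ℝ) : ℂ), Complex.norm_exp_ofReal_mul_I,
      mul_one, norm_pow, norm_mul, Complex.norm_I, one_mul, Complex.norm_real, Complex.norm_real,
      Real.norm_of_nonneg (by positivity), Real.norm_eq_abs]
    gcongr

lemma integrable_sphere_heatRayIntegral (hm : IsEllipticSymbol m σ c₁ c₂) (k l : ℕ) (r : ℝ) :
    Integrable (fun θ : sphere (0 : E) 1 => heatRayIntegral m k l r θ)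
      (volume : Measure E).toSphere := by
  simpa only [heatRayIntegral, real_inner_smul_left, mul_assoc] using
    (hm.integrable_sphere_prod k l r).integral_prod_left

lemma integral_sphere_heatRayIntegral (hm : IsEllipticSymbol m σ c₁ c₂) (k l : ℕ) (r : ℝ) :
    ∫ θ : sphere (0 : E) 1, heatRayIntegral m k l r θ ∂(volume : Measure E).toSphere =
      ∫ ω : sphere (0 : E) 1, heatRayIntegral (fun ξ : E => m ω * ‖ξ‖ ^ σ) k l r ω
        ∂(volume : Measure E).toSphere := by
  have hswap := integral_sphere_integral_mul_inner (E := E)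
    (w := fun ξ => ((m ξ ^ k * Real.exp (-m ξ) : ℝ) : ℂ))
    (K := fun τ => (Complex.I * τ) ^ l * Complex.exp (Complex.I * ((r * τ : ℝ) : ℂ)))
    (hm.integrable_sphere_prod k l r)
  simpa only [heatRayIntegral, hm.map_smul _ _ (norm_nonneg _), mul_comm (‖_‖ ^ σ),
    real_inner_smul_left, mul_assoc] using hswap

lemma exists_norm_integral_sphere_heatRayIntegral_le (hm : IsEllipticSymbol m σ c₁ c₂)
    (k l : ℕ) :
    ∃ C ≥ 0, ∀ r > 0,
      ‖∫ θ : sphere (0 : E) 1, heatRayIntegral m k l r θ ∂(volume : Measure E).toSphere‖ ≤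
        C * r ^ (-(Module.finrank ℝ E : ℝ) - (σ * (max k 1 : ℕ) + l)) := by
  obtain ⟨C, hC, hdecay⟩ := exists_norm_heatRayIntegral_radial_le (E := E) hm.exponent_pos k l
  have hpos (ω : sphere (0 : E) 1) : 0 < m ω := hm.lower_pos.trans_le <| by
    simpa using hm.lower_le ω
  have hle (ω : sphere (0 : E) 1) : m ω ≤ c₂ := by simpa using hm.le_upper ω
  obtain ⟨ω₀, hω₀⟩ := NormedSpace.sphere_nonempty (E := E) (x := 0).2 zero_le_one
  have hc₂ : 0 ≤ c₂ := (hpos ⟨ω₀, hω₀⟩).le.trans (hle ⟨ω₀, hω₀⟩)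
  refine ⟨C * c₂ ^ max k 1 * (volume : Measure E).toSphere.real univ, by positivity,
    fun r hr => ?_⟩
  rw [hm.integral_sphere_heatRayIntegral, mul_right_comm]
  refine norm_integral_le_of_norm_le_const (.of_forall fun ω => ?_)
  refine (hdecay _ (hpos ω) ω (norm_eq_of_mem_sphere ω) r hr).trans ?_
  have := (hpos ω).le
  gcongr
  exact hle ω

end IsEllipticSymbol

end HeatProfile

/-! ### The symbol of a stable operator -/

/-- The symbol at `1` of the one-dimensional operator with jump density `r ^ (-1 - σ)` on `r > 0`;
it relates `symb` to the moments `∫ |⟪ξ, θ⟫| ^ σ dμ(θ)`. -/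
def symbConst (σ : ℝ) : ℝ := ∫ r in Ioi (0 : ℝ), (1 - Real.cos r) * r ^ (-1 - σ)

lemma one_sub_cos_mul_rpow_nonneg {r : ℝ} (hr : 0 ≤ r) (s : ℝ) : 0 ≤ (1 - Real.cos r) * r ^ s :=
  mul_nonneg (sub_nonneg.2 (Real.cos_le_one r)) (Real.rpow_nonneg hr s)

lemma integrableOn_one_sub_cos_mul_rpow {σ : ℝ} (hσ0 : 0 < σ) (hσ2 : σ < 2) :
    IntegrableOn (fun r : ℝ => (1 - Real.cos r) * r ^ (-1 - σ)) (Ioi 0) := by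
  rw [← Ioc_union_Ioi_eq_Ioi zero_le_one, integrableOn_union]
  constructor
  · have hrpow : IntegrableOn (fun r : ℝ => r ^ (1 - σ)) (Ioc 0 1) := by
      rw [← intervalIntegrable_iff_integrableOn_Ioc_of_le zero_le_one]
      exact intervalIntegral.intervalIntegrable_rpow' (by linarith)
    refine hrpow.mono' (by fun_prop) (ae_restrict_of_forall_mem measurableSet_Ioc fun r hr => ?_)
    have hcos : 1 - Real.cos r ≤ r ^ 2 := by
      nlinarith [Real.one_sub_sq_div_two_le_cos (x := r), sq_nonneg r]
    calc ‖(1 - Real.cos r) * r ^ (-1 - σ)‖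
        = (1 - Real.cos r) * r ^ (-1 - σ) :=
          Real.norm_of_nonneg (one_sub_cos_mul_rpow_nonneg hr.1.le _)
      _ ≤ r ^ 2 * r ^ (-1 - σ) := by have := hr.1.le; gcongr
      _ = r ^ (1 - σ) := by
          rw [← Real.rpow_natCast, ← Real.rpow_add hr.1]; congr 1; push_cast; ring
  · have hrpow : IntegrableOn (fun r : ℝ => 2 * r ^ (-1 - σ)) (Ioi 1) :=
      (integrableOn_Ioi_rpow_of_lt (by linarith) zero_lt_one).const_mul 2
    refine hrpow.mono' (by fun_prop)
      (ae_restrict_of_forall_mem measurableSet_Ioi fun r (hr : 1 < r) => ?_)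
    have hr0 : 0 ≤ r := zero_le_one.trans hr.le
    rw [Real.norm_of_nonneg (one_sub_cos_mul_rpow_nonneg hr0 _)]
    gcongr
    linarith [Real.neg_one_le_cos r]

lemma symbConst_pos {σ : ℝ} (hσ0 : 0 < σ) (hσ2 : σ < 2) : 0 < symbConst σ := by
  rw [symbConst, setIntegral_pos_iff_support_of_nonneg_ae
    (ae_restrict_of_forall_mem measurableSet_Ioi fun r (hr : 0 < r) =>
      one_sub_cos_mul_rpow_nonneg hr.le _) (integrableOn_one_sub_cos_mul_rpow hσ0 hσ2)]
  refine lt_of_lt_of_le (b := volume (Ioo (0 : ℝ) 1)) (by simp) (measure_mono fun r hr => ?_)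
  have hcos : Real.cos r < 1 := by
    simpa using Real.cos_lt_cos_of_nonneg_of_le_pi le_rfl (by linarith [hr.2, pi_gt_three]) hr.1
  exact ⟨(mul_pos (sub_pos.2 hcos) (Real.rpow_pos_of_pos hr.1 _)).ne', hr.1⟩

lemma integral_one_sub_cos_mul {σ : ℝ} (hσ0 : 0 < σ) (c : ℝ) :
    ∫ r in Ioi (0 : ℝ), (1 - Real.cos (r * c)) * r ^ (-1 - σ) = |c| ^ σ * symbConst σ := by
  rcases eq_or_ne c 0 with rfl | hc
  · simp [Real.zero_rpow hσ0.ne']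
  have hc' : 0 < |c| := abs_pos.2 hc
  have hrescale : ∫ r in Ioi (0 : ℝ), (1 - Real.cos (r * c)) * r ^ (-1 - σ) =
      ∫ r in Ioi (0 : ℝ), |c| ^ (1 + σ) * ((1 - Real.cos (|c| * r)) * (|c| * r) ^ (-1 - σ)) := by
    refine setIntegral_congr_fun measurableSet_Ioi fun r (hr : 0 < r) => ?_
    have hcos : Real.cos (|c| * r) = Real.cos (r * c) := by
      rw [← Real.cos_abs (r * c), abs_mul, abs_of_pos hr, mul_comm]
    have hrpow : |c| ^ (1 + σ) * |c| ^ (-1 - σ) = 1 := by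
      rw [← Real.rpow_add hc']; simp
    rw [hcos, Real.mul_rpow hc'.le hr.le]
    linear_combination (-(1 - Real.cos (r * c)) * r ^ (-1 - σ)) * hrpow
  rw [hrescale, integral_const_mul, integral_comp_mul_left_Ioi
    (fun r => (1 - Real.cos r) * r ^ (-1 - σ)) 0 hc', mul_zero, smul_eq_mul, symbConst,
    Real.rpow_add hc', Real.rpow_one]
  field_simp

section Symbol

variable {N : ℕ} {σ lam : ℝ} {μ : Measure (Sph N)}

lemma symb_eq (hσ0 : 0 < σ) (ξ : Eu N) :
    symb N σ μ ξ = (∫ θ : Sph N, |⟪ξ, (θ : Eu N)⟫_ℝ| ^ σ ∂μ) * symbConst σ := by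
  simp_rw [symb, integral_one_sub_cos_mul hσ0, integral_mul_const]

lemma symb_smul (hσ0 : 0 < σ) (ξ : Eu N) {s : ℝ} (hs : 0 ≤ s) :
    symb N σ μ (s • ξ) = s ^ σ * symb N σ μ ξ := by
  simp_rw [symb_eq hσ0, real_inner_smul_left, abs_mul, abs_of_nonneg hs,
    Real.mul_rpow hs (abs_nonneg _), integral_const_mul, mul_assoc]

lemma le_symb_of_elliptic (hσ0 : 0 < σ) (hσ2 : σ < 2) (hell : Elliptic N σ μ lam) (ξ : Eu N) :
    lam * symbConst σ * ‖ξ‖ ^ σ ≤ symb N σ μ ξ := by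
  have hsphere (ω : Sph N) : lam * symbConst σ ≤ symb N σ μ ω := by
    rw [symb_eq hσ0]
    exact mul_le_mul_of_nonneg_right (hell ω) (symbConst_pos hσ0 hσ2).le
  rcases eq_or_ne ξ 0 with rfl | hξ
  · simp [symb, Real.zero_rpow hσ0.ne']
  have hξ' : ‖ξ‖ ≠ 0 := norm_ne_zero_iff.2 hξ
  let ω : Sph N := ⟨‖ξ‖⁻¹ • ξ, by simp [norm_smul, hξ']⟩
  calc lam * symbConst σ * ‖ξ‖ ^ σ ≤ symb N σ μ ω * ‖ξ‖ ^ σ := by gcongr; exact hsphere ω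
    _ = symb N σ μ (‖ξ‖ • (ω : Eu N)) := by rw [symb_smul hσ0 _ (norm_nonneg ξ), mul_comm]
    _ = symb N σ μ ξ := by simp only [ω, smul_inv_smul₀ hξ']

variable [IsFiniteMeasure μ]

lemma measurable_symb (hσ0 : 0 < σ) : Measurable (symb N σ μ) := by
  have hinner : Continuous fun p : Eu N × Sph N => |⟪p.1, (p.2 : Eu N)⟫_ℝ| := by fun_prop
  have hmoment := ((hinner.measurable.pow_const σ).stronglyMeasurable.integral_prod_right'
    (ν := μ)).measurable
  simpa only [funext (symb_eq (μ := μ) hσ0)] using hmoment.mul_const (symbConst σ)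

lemma symb_le (hσ0 : 0 < σ) (hσ2 : σ < 2) (ξ : Eu N) :
    symb N σ μ ξ ≤ μ.real univ * symbConst σ * ‖ξ‖ ^ σ := by
  have hle (θ : Sph N) : ‖|⟪ξ, (θ : Eu N)⟫_ℝ| ^ σ‖ ≤ ‖ξ‖ ^ σ := by
    rw [Real.norm_of_nonneg (by positivity)]
    gcongr
    simpa using abs_real_inner_le_norm ξ (θ : Eu N)
  have hmoment := (le_abs_self _).trans
    (norm_integral_le_of_norm_le_const (μ := μ) (.of_forall hle))
  rw [symb_eq hσ0, mul_right_comm, mul_comm (μ.real univ)]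
  exact mul_le_mul_of_nonneg_right hmoment (symbConst_pos hσ0 hσ2).le

lemma isEllipticSymbol_symb (hσ0 : 0 < σ) (hσ2 : σ < 2) (hlam : 0 < lam)
    (hell : Elliptic N σ μ lam) :
    IsEllipticSymbol (symb N σ μ) σ (lam * symbConst σ) (μ.real univ * symbConst σ) where
  exponent_pos := hσ0
  lower_pos := mul_pos hlam (symbConst_pos hσ0 hσ2)
  measurable := measurable_symb hσ0
  map_smul ξ _ hs := symb_smul hσ0 ξ hs
  lower_le := le_symb_of_elliptic hσ0 hσ2 hell
  le_upper := symb_le hσ0 hσ2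

end Symbol

theorem stmt4_general {E : Type*} [NormedAddCommGroup E] [InnerProductSpace ℝ E]
    [FiniteDimensional ℝ E] [Nontrivial E] [MeasurableSpace E] [BorelSpace E] {m : E → ℝ}
    {σ c₁ c₂ : ℝ} (hm : IsEllipticSymbol m σ c₁ c₂) (k l : ℕ) :
    ∃ C > 0, ∀ r > 0,
      |∫ θ : sphere (0 : E) 1, iteratedDeriv l (fun s : ℝ => heatProfile m k (s • (θ : E))) r
          ∂(volume : Measure E).toSphere| ≤
        C * r ^ (-(Module.finrank ℝ E : ℝ) - (1 + max ((k : ℝ) - 1) 0) * σ - l) := by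
  obtain ⟨C, hC, hdecay⟩ := hm.exists_norm_integral_sphere_heatRayIntegral_le k l
  set b : ℝ := (2 * π) ^ (-(Module.finrank ℝ E : ℝ))
  refine ⟨b * (C + 1), by positivity, fun r hr => ?_⟩
  have hexponent : -(Module.finrank ℝ E : ℝ) - (1 + max ((k : ℝ) - 1) 0) * σ - l =
      -(Module.finrank ℝ E : ℝ) - (σ * (max k 1 : ℕ) + l) := by
    have hmax : 1 + max ((k : ℝ) - 1) 0 = (max k 1 : ℕ) := by rw [← max_add_add_left]; simp
    rw [hmax]; ring
  have hre := Complex.reCLM.integral_comp_comm (hm.integrable_sphere_heatRayIntegral k l r)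
  simp only [Complex.reCLM_apply] at hre
  simp_rw [hm.iteratedDeriv_heatProfile_smul, integral_const_mul, hre, abs_mul]
  rw [abs_of_nonneg (by positivity), hexponent, mul_assoc]
  gcongr
  refine (Complex.abs_re_le_norm _).trans ((hdecay r hr).trans ?_)
  gcongr
  linarith

/-- Averaged decay of radial derivatives of fractional derivatives of
the heat-kernel profile:
`|∫_{𝕊^{N−1}} ∂_r^l 𝓛^kΦ(rθ) dθ| ≤ C r^{−N−(1+(k−1)₊)σ−l}` for `r` large. -/
theorem stmt4 (N : ℕ) (hN : 1 ≤ N) (σ : ℝ) (hσ0 : 0 < σ) (hσ2 : σ < 2)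
    (μ : Measure (Sph N)) [IsFiniteMeasure μ]
    (lam : ℝ) (hlam : 0 < lam) (hell : Elliptic N σ μ lam)
    (k l : ℕ) :
    ∃ C > 0, ∃ R0 ≥ (1 : ℝ), ∀ r ≥ R0,
      |∫ θ : Sph N,
          iteratedDeriv l (fun s : ℝ => LkPhi N σ μ k (s • (θ : Eu N))) r ∂(sphMeas N)|
        ≤ C * r ^ (-(N : ℝ) - (1 + max ((k : ℝ) - 1) 0) * σ - l) := by
  have : Nonempty (Fin N) := ⟨⟨0, hN⟩⟩
  obtain ⟨C, hC, hdecay⟩ :=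
    stmt4_general (isEllipticSymbol_symb hσ0 hσ2 hlam hell) k l
  simp only [heatProfile, finrank_euclideanSpace_fin] at hdecay
  exact ⟨C, hC, 1, le_rfl, fun r hr => hdecay r (zero_lt_one.trans_le hr)⟩
end
end

section
/- For every 0 < a < b, the function 𝓛P(x,t) = t^{−N/σ−1} (𝓛Φ)(x t^{−1/σ}) (which equals −∂_t P(x,t)) is absolutely integrable over B⁺_{a,b} = {(x,t) ∈ ℝ^N × ℝ : t > 0 and a² < |x|² + t^{2/σ} < b²}, and ∫_{B⁺_{a,b}} 𝓛P(x,t) dx dt = 0. -/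
open MeasureTheory Metric Real Set
open scoped InnerProductSpace ENNReal

noncomputable section

/-!
`𝓛P` is homogeneous of the critical degree for the parabolic dilations, so on an annulus the scale
decouples: with `y = t^{-1/σ} x` the annulus becomes `a^σ < t (1 + |y|²)^{σ/2} < b^σ`, an interval
in `t` of logarithmic length `σ log (b / a)` for every `y`, and
`∫_{B⁺_{a,b}} 𝓛P = σ log (b / a) ∫ 𝓛Φ`. By Fourier inversion `∫ 𝓛Φ = m(0) e^{-m(0)} = 0`.

The point is the integrability of `𝓛Φ`, since `m` need not be smooth, at `0` or elsewhere. Split the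
Lévy measure `r^{-1-σ} dr dμ(θ)` at jump size one. The small jumps have a smooth symbol `s` of
temperate growth, and ellipticity makes `e^{-s}` a Schwartz function. The large jumps form a finite
measure `κ`, with symbol `κ(ℝ^N)` minus the characteristic function of the symmetrization of `κ`;
its exponential is a multiple of the characteristic function of a compound Poisson distribution.
Hence `m^k e^{-m}` is a combination of products of a Schwartz function and the characteristic
function of a finite measure, and the inverse Fourier transform of such a product is the convolution
of an integrable function with a finite measure.
-/

section TemperateGrowth

universe u

variable {E F : Type u} [NormedAddCommGroup E] [InnerProductSpace ℝ E]
  [NormedAddCommGroup F] [NormedSpace ℝ F] {φ : ℝ → ℝ} {k : ℕ}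

theorem norm_comp_inner_smul_le {C : ℝ} (hφ : ∀ u, |φ u| ≤ C * |u| ^ k) (v ξ : E) (w : F) :
    ‖φ ⟪v, ξ⟫_ℝ • w‖ ≤ C * ‖ξ‖ ^ k * (‖v‖ ^ k * ‖w‖) := by
  have hC : 0 ≤ C := by simpa using (abs_nonneg _).trans (hφ 1)
  calc ‖φ ⟪v, ξ⟫_ℝ • w‖ = |φ ⟪v, ξ⟫_ℝ| * ‖w‖ := norm_smul _ _
    _ ≤ C * |⟪v, ξ⟫_ℝ| ^ k * ‖w‖ := by gcongr; exact hφ _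
    _ ≤ C * (‖v‖ * ‖ξ‖) ^ k * ‖w‖ := by gcongr; exact abs_real_inner_le_norm v ξ
    _ = C * ‖ξ‖ ^ k * (‖v‖ ^ k * ‖w‖) := by ring

variable [MeasurableSpace E] {ν : Measure E} {T : E → F}

theorem norm_integral_comp_inner_smul_le {C : ℝ} (hC : ∀ u, |φ u| ≤ C * |u| ^ k)
    (hk : Integrable (fun v ↦ ‖v‖ ^ k * ‖T v‖) ν) (ξ : E) :
    ‖∫ v, φ ⟪v, ξ⟫_ℝ • T v ∂ν‖ ≤ (C * ∫ v, ‖v‖ ^ k * ‖T v‖ ∂ν) * (1 + ‖ξ‖) ^ k := by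
  have hC0 : 0 ≤ C := by simpa using (abs_nonneg _).trans (hC 1)
  calc ‖∫ v, φ ⟪v, ξ⟫_ℝ • T v ∂ν‖ ≤ ∫ v, C * ‖ξ‖ ^ k * (‖v‖ ^ k * ‖T v‖) ∂ν :=
        norm_integral_le_of_norm_le (hk.const_mul _)
          (.of_forall fun v ↦ norm_comp_inner_smul_le hC v ξ (T v))
    _ = C * (∫ v, ‖v‖ ^ k * ‖T v‖ ∂ν) * ‖ξ‖ ^ k := by rw [integral_const_mul]; ring
    _ ≤ C * (∫ v, ‖v‖ ^ k * ‖T v‖ ∂ν) * (1 + ‖ξ‖) ^ k := by gcongr; linarith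

variable [OpensMeasurableSpace E]

theorem aestronglyMeasurable_comp_inner_smul (hφ : Continuous φ) (hT : AEStronglyMeasurable T ν)
    (ξ : E) : AEStronglyMeasurable (fun v ↦ φ ⟪v, ξ⟫_ℝ • T v) ν :=
  (hφ.comp (continuous_id.inner continuous_const)).aestronglyMeasurable.smul hT

theorem integrable_comp_inner_smul (hφ : Continuous φ) {C : ℝ} (hC : ∀ u, |φ u| ≤ C * |u| ^ k)
    (hT : AEStronglyMeasurable T ν) (hk : Integrable (fun v ↦ ‖v‖ ^ k * ‖T v‖) ν) (ξ : E) :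
    Integrable (fun v ↦ φ ⟪v, ξ⟫_ℝ • T v) ν :=
  (hk.const_mul (C * ‖ξ‖ ^ k)).mono' (aestronglyMeasurable_comp_inner_smul hφ hT ξ)
    (.of_forall fun v ↦ norm_comp_inner_smul_le hC v ξ (T v))

variable [SecondCountableTopology E]

theorem aestronglyMeasurable_innerSL_smulRight (hT : AEStronglyMeasurable T ν) :
    AEStronglyMeasurable (fun v ↦ (innerSL ℝ v).smulRight (T v)) ν :=
  (ContinuousLinearMap.smulRightL ℝ E F).aestronglyMeasurable_comp₂
    (innerSL ℝ (E := E)).continuous.aestronglyMeasurable hT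

theorem hasFDerivAt_integral_comp_inner_smul (hφ : ContDiff ℝ 1 φ) {C C' : ℝ} {k' : ℕ}
    (hC : ∀ u, |φ u| ≤ C * |u| ^ k) (hC' : ∀ u, |deriv φ u| ≤ C' * |u| ^ k')
    (hT : AEStronglyMeasurable T ν) (hk : Integrable (fun v ↦ ‖v‖ ^ k * ‖T v‖) ν)
    (hk' : Integrable (fun v ↦ ‖v‖ ^ (k' + 1) * ‖T v‖) ν) (ξ : E) :
    HasFDerivAt (fun ξ ↦ ∫ v, φ ⟪v, ξ⟫_ℝ • T v ∂ν)
      (∫ v, deriv φ ⟪v, ξ⟫_ℝ • (innerSL ℝ v).smulRight (T v) ∂ν) ξ := by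
  have hC'0 : 0 ≤ C' := by simpa using (abs_nonneg _).trans (hC' 1)
  refine hasFDerivAt_integral_of_dominated_of_fderiv_le (𝕜 := ℝ)
    (F' := fun ξ v ↦ deriv φ ⟪v, ξ⟫_ℝ • (innerSL ℝ v).smulRight (T v))
    (bound := fun v ↦ C' * (1 + ‖ξ‖) ^ k' * (‖v‖ ^ (k' + 1) * ‖T v‖))
    (ball_mem_nhds ξ one_pos)
    (.of_forall fun x ↦ aestronglyMeasurable_comp_inner_smul hφ.continuous hT x)
    (integrable_comp_inner_smul hφ.continuous hC hT hk ξ)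
    (aestronglyMeasurable_comp_inner_smul (hφ.continuous_deriv le_rfl)
      (aestronglyMeasurable_innerSL_smulRight hT) ξ)
    (.of_forall fun v x hx ↦ ?_) (hk'.const_mul _) (.of_forall fun v x _ ↦ ?_)
  · have hx' : ‖x‖ ≤ 1 + ‖ξ‖ := by
      linarith [norm_sub_norm_le x ξ, mem_ball_iff_norm.1 hx]
    calc ‖deriv φ ⟪v, x⟫_ℝ • (innerSL ℝ v).smulRight (T v)‖
        ≤ C' * ‖x‖ ^ k' * (‖v‖ ^ k' * ‖(innerSL ℝ v).smulRight (T v)‖) :=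
          norm_comp_inner_smul_le (F := E →L[ℝ] F) hC' v x _
      _ = C' * ‖x‖ ^ k' * (‖v‖ ^ (k' + 1) * ‖T v‖) := by
          rw [ContinuousLinearMap.norm_smulRight_apply, innerSL_apply_norm]; ring
      _ ≤ C' * (1 + ‖ξ‖) ^ k' * (‖v‖ ^ (k' + 1) * ‖T v‖) := by gcongr
  · have hφ' : HasDerivAt φ (deriv φ ⟪v, x⟫_ℝ) ⟪v, x⟫_ℝ :=
      (hφ.differentiable one_ne_zero _).hasDerivAt
    convert! (hφ'.comp_hasFDerivAt x (innerSL ℝ v).hasFDerivAt).smul_const (T v) using 1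
    ext y
    simp [mul_smul]

-- The truncated exponent `k - j` means that `φ` vanishes to order `k` at `0` and that its
-- derivatives of order at least `k` are bounded. The target `F` varies in the induction because
-- differentiating replaces `T v` by the `(E →L[ℝ] F)`-valued `⟪v, ·⟫ T v`.
theorem contDiff_and_norm_iteratedFDeriv_integral_comp_inner_smul_le (n : ℕ) :
    ∀ {F : Type u} [NormedAddCommGroup F] [NormedSpace ℝ F] {φ : ℝ → ℝ} {k : ℕ} {T : E → F},
      ContDiff ℝ (⊤ : ℕ∞) φ →
      (∀ j, ∃ C, ∀ u, |iteratedDeriv j φ u| ≤ C * |u| ^ (k - j)) →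
      AEStronglyMeasurable T ν → (∀ j ≥ k, Integrable (fun v ↦ ‖v‖ ^ j * ‖T v‖) ν) →
      ContDiff ℝ n (fun ξ ↦ ∫ v, φ ⟪v, ξ⟫_ℝ • T v ∂ν) ∧ ∃ (p : ℕ) (C : ℝ), ∀ ξ,
        ‖iteratedFDeriv ℝ n (fun ξ ↦ ∫ v, φ ⟪v, ξ⟫_ℝ • T v ∂ν) ξ‖ ≤ C * (1 + ‖ξ‖) ^ p := by
  induction n with
  | zero =>
    intro F _ _ φ k T hφ hk hT hTk
    obtain ⟨C, hC⟩ := hk 0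
    obtain ⟨C', hC'⟩ := hk 1
    rw [iteratedDeriv_zero, Nat.sub_zero] at hC
    rw [iteratedDeriv_one] at hC'
    refine ⟨contDiff_zero.2 <| continuous_iff_continuousAt.2 fun ξ ↦
      (hasFDerivAt_integral_comp_inner_smul (hφ.of_le (by simp)) hC hC' hT (hTk k le_rfl)
        (hTk _ (by omega)) ξ).continuousAt, k, C * ∫ v, ‖v‖ ^ k * ‖T v‖ ∂ν, fun ξ ↦ ?_⟩
    rw [norm_iteratedFDeriv_zero]
    exact norm_integral_comp_inner_smul_le hC (hTk k le_rfl) ξ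
  | succ n ih =>
    intro F _ _ φ k T hφ hk hT hTk
    obtain ⟨C, hC⟩ := hk 0
    obtain ⟨C', hC'⟩ := hk 1
    rw [iteratedDeriv_zero, Nat.sub_zero] at hC
    rw [iteratedDeriv_one] at hC'
    have hderiv := hasFDerivAt_integral_comp_inner_smul (hφ.of_le (by simp)) hC hC' hT
      (hTk k le_rfl) (hTk _ (by omega))
    have hfderiv : fderiv ℝ (fun ξ ↦ ∫ v, φ ⟪v, ξ⟫_ℝ • T v ∂ν) =
        fun ξ ↦ ∫ v, deriv φ ⟪v, ξ⟫_ℝ • (innerSL ℝ v).smulRight (T v) ∂ν :=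
      funext fun ξ ↦ (hderiv ξ).fderiv
    obtain ⟨hsmooth, p, B, hB⟩ := ih (k := k - 1) (contDiff_infty_iff_deriv.1 hφ).2
      (fun j ↦ by simpa only [← iteratedDeriv_succ', Nat.sub_sub, Nat.add_comm 1] using hk (j + 1))
      (aestronglyMeasurable_innerSL_smulRight hT) (fun j hj ↦ by
        simpa only [ContinuousLinearMap.norm_smulRight_apply, innerSL_apply_norm, pow_succ,
          mul_assoc] using hTk (j + 1) (by omega))
    refine ⟨?_, p, B, fun ξ ↦ ?_⟩
    · push_cast
      refine contDiff_succ_iff_fderiv.2 ⟨fun ξ ↦ (hderiv ξ).differentiableAt, by simp, ?_⟩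
      rwa [hfderiv]
    · rw [← norm_iteratedFDeriv_fderiv, hfderiv]
      exact hB ξ

theorem hasTemperateGrowth_integral_comp_inner_smul (hφ : ContDiff ℝ (⊤ : ℕ∞) φ)
    (hk : ∀ j, ∃ C, ∀ u, |iteratedDeriv j φ u| ≤ C * |u| ^ (k - j))
    (hT : AEStronglyMeasurable T ν) (hTk : ∀ j ≥ k, Integrable (fun v ↦ ‖v‖ ^ j * ‖T v‖) ν) :
    Function.HasTemperateGrowth (fun ξ ↦ ∫ v, φ ⟪v, ξ⟫_ℝ • T v ∂ν) :=
  have h (n : ℕ) := contDiff_and_norm_iteratedFDeriv_integral_comp_inner_smul_le n hφ hk hT hTk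
  ⟨contDiff_infty.2 fun n ↦ (h n).1, fun n ↦ (h n).2⟩

end TemperateGrowth

section Schwartz

theorem norm_iteratedFDeriv_exp_neg (n : ℕ) (s : ℝ) :
    ‖iteratedFDeriv ℝ n (fun s ↦ Real.exp (-s)) s‖ = Real.exp (-s) := by
  rw [norm_iteratedFDeriv_eq_norm_iteratedDeriv, iteratedDeriv_comp_neg (f := Real.exp),
    iteratedDeriv_eq_iterate, Real.iter_deriv_exp]
  simp

variable {E : Type*} [NormedAddCommGroup E] {f : E → ℝ}

theorem exists_one_add_norm_pow_mul_exp_neg_le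
    (hf : ∀ k : ℕ, ∃ B, ∀ x, ‖x‖ ^ k * Real.exp (-f x) ≤ B) (k : ℕ) :
    ∃ B, ∀ x, (1 + ‖x‖) ^ k * Real.exp (-f x) ≤ B := by
  obtain ⟨B₀, hB₀⟩ := hf 0
  obtain ⟨B, hB⟩ := hf k
  refine ⟨2 ^ (k - 1) * (B₀ + B), fun x ↦ ?_⟩
  calc (1 + ‖x‖) ^ k * Real.exp (-f x)
      ≤ 2 ^ (k - 1) * (1 ^ k + ‖x‖ ^ k) * Real.exp (-f x) := by
        gcongr; exact add_pow_le zero_le_one (norm_nonneg x) k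
    _ = 2 ^ (k - 1) * (‖x‖ ^ 0 * Real.exp (-f x) + ‖x‖ ^ k * Real.exp (-f x)) := by ring
    _ ≤ 2 ^ (k - 1) * (B₀ + B) := by gcongr; exacts [hB₀ x, hB x]

theorem exists_norm_pow_mul_exp_neg_le_of_rpow_le {c σ : ℝ} (hc : 0 < c) (hσ : 0 < σ)
    (hf : ∀ x, c * ‖x‖ ^ σ ≤ f x) (k : ℕ) : ∃ B, ∀ x, ‖x‖ ^ k * Real.exp (-f x) ≤ B := by
  refine ⟨(k / σ / c) ^ (k / σ), fun x ↦ ?_⟩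
  have hbound : ‖x‖ ^ k ≤ (k / σ / c) ^ (k / σ) * Real.exp (c * ‖x‖ ^ σ) := by
    have h := ProbabilityTheory.rpow_abs_le_mul_exp_abs (‖x‖ ^ σ) (p := k / σ) (by positivity)
      hc.ne'
    rwa [abs_of_pos hc, abs_of_nonneg (by positivity), ← Real.rpow_mul (norm_nonneg x),
      mul_div_cancel₀ _ hσ.ne', Real.rpow_natCast] at h
  rw [Real.exp_neg, ← div_eq_mul_inv, div_le_iff₀ (Real.exp_pos _)]
  exact hbound.trans (by gcongr; exact hf x)

variable [NormedSpace ℝ E]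

theorem exists_norm_pow_mul_norm_iteratedFDeriv_exp_neg_le (hft : f.HasTemperateGrowth)
    (hf : ∀ k : ℕ, ∃ B, ∀ x, ‖x‖ ^ k * Real.exp (-f x) ≤ B) (k n : ℕ) :
    ∃ B, ∀ x, ‖x‖ ^ k * ‖iteratedFDeriv ℝ n (fun x ↦ Real.exp (-f x)) x‖ ≤ B := by
  obtain ⟨p, C, hC, hfC⟩ := hft.norm_iteratedFDeriv_le_uniform n
  obtain ⟨B, hB⟩ := exists_one_add_norm_pow_mul_exp_neg_le hf (k + p * n)
  refine ⟨n.factorial * (1 + C) ^ n * B, fun x ↦ ?_⟩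
  have hD : 1 ≤ (1 + C) * (1 + ‖x‖) ^ p :=
    one_le_mul_of_one_le_of_one_le (by simpa) (one_le_pow₀ (by simp))
  have hcomp : ‖iteratedFDeriv ℝ n (fun x ↦ Real.exp (-f x)) x‖ ≤
      n.factorial * Real.exp (-f x) * ((1 + C) * (1 + ‖x‖) ^ p) ^ n := by
    refine norm_iteratedFDeriv_comp_le (𝕜 := ℝ) (g := fun s ↦ Real.exp (-s))
      (Real.contDiff_exp.comp contDiff_neg) hft.1 (mod_cast le_top) x
      (fun i _ ↦ (norm_iteratedFDeriv_exp_neg i _).le) fun i hi hin ↦ ?_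
    calc ‖iteratedFDeriv ℝ i f x‖ ≤ C * (1 + ‖x‖) ^ p := hfC i hin x
      _ ≤ (1 + C) * (1 + ‖x‖) ^ p := by gcongr; linarith
      _ ≤ ((1 + C) * (1 + ‖x‖) ^ p) ^ i := le_self_pow₀ hD (by omega)
  calc ‖x‖ ^ k * ‖iteratedFDeriv ℝ n (fun x ↦ Real.exp (-f x)) x‖
      ≤ (1 + ‖x‖) ^ k *
          (n.factorial * Real.exp (-f x) * ((1 + C) * (1 + ‖x‖) ^ p) ^ n) := by
        gcongr; linarith
    _ = n.factorial * (1 + C) ^ n * ((1 + ‖x‖) ^ (k + p * n) * Real.exp (-f x)) := by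
        rw [mul_pow, ← pow_mul, pow_add]; ring
    _ ≤ n.factorial * (1 + C) ^ n * B := by gcongr; exact hB x

/-- The Schwartz function `e^{-f}`, for `f` of temperate growth and `e^{-f}` of rapid decay. -/
def expNegSchwartz (hft : f.HasTemperateGrowth)
    (hf : ∀ k : ℕ, ∃ B, ∀ x, ‖x‖ ^ k * Real.exp (-f x) ≤ B) : SchwartzMap E ℂ :=
  SchwartzMap.postcompCLM Complex.ofRealCLM
    { toFun := fun x ↦ Real.exp (-f x)
      smooth' := Real.contDiff_exp.comp hft.1.neg
      decay' := exists_norm_pow_mul_norm_iteratedFDeriv_exp_neg_le hft hf }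

theorem expNegSchwartz_apply (hft : f.HasTemperateGrowth)
    (hf : ∀ k : ℕ, ∃ B, ∀ x, ‖x‖ ^ k * Real.exp (-f x) ≤ B) (x : E) :
    expNegSchwartz hft hf x = Real.exp (-f x) :=
  rfl

end Schwartz

section Fourier

open scoped FourierTransform

variable {E : Type*} [NormedAddCommGroup E] [InnerProductSpace ℝ E] [FiniteDimensional ℝ E]
  [MeasurableSpace E] [BorelSpace E]

/-- Functions which are integrable together with their inverse Fourier transform. -/
def HasIntegrableFourierInv (g : E → ℂ) : Prop :=
  Integrable g ∧ Integrable (𝓕⁻ g)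

namespace HasIntegrableFourierInv

theorem of_schwartzMap (S : SchwartzMap E ℂ) : HasIntegrableFourierInv S :=
  ⟨S.integrable, SchwartzMap.fourierInv_coe S ▸ (𝓕⁻ S).integrable⟩

theorem sub {f g : E → ℂ} (hf : HasIntegrableFourierInv f) (hg : HasIntegrableFourierInv g) :
    HasIntegrableFourierInv (f - g) := by
  refine ⟨hf.1.sub hg.1, (hf.2.sub hg.2).congr (.of_forall fun x ↦ ?_)⟩
  have hint : ∀ {h : E → ℂ}, Integrable h → Integrable fun ξ ↦ 𝐞 ⟪ξ, x⟫_ℝ • h ξ := fun hh ↦ by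
    simpa using (Real.fourierIntegral_convergent_iff (-x)).2 hh
  simp only [Pi.sub_apply, Real.fourierInv_eq, smul_sub]
  exact (integral_sub (hint hf.1) (hint hg.1)).symm

theorem integral_fourierInv {g : E → ℂ} (hg : HasIntegrableFourierInv g) (hc : Continuous g) :
    ∫ x, 𝓕⁻ g x = g 0 := by
  have hfourier : Integrable (𝓕 g) := by
    simpa only [Real.fourierInv_eq_fourier_neg, neg_neg] using hg.2.comp_neg
  simpa [Real.fourier_eq'] using congrFun (hc.fourier_fourierInv_eq hg.1 hfourier) 0

theorem mul_charFun {g : E → ℂ} (hg : HasIntegrableFourierInv g) (κ : Measure E)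
    [IsFiniteMeasure κ] : HasIntegrableFourierInv fun ξ ↦ g ξ * charFun κ ξ := by
  have hconv : ∀ x, 𝓕⁻ (fun ξ ↦ g ξ * charFun κ ξ) x = ∫ y, 𝓕⁻ g ((2 * π)⁻¹ • y + x) ∂κ := by
    intro x
    have hint : Integrable (fun p : E × E ↦
        Complex.exp (↑(2 * π * ⟪p.1, (2 * π)⁻¹ • p.2 + x⟫_ℝ) * Complex.I) * g p.1)
        (volume.prod κ) :=
      (hg.1.comp_fst κ).bdd_mul (c := 1) (Continuous.aestronglyMeasurable (by fun_prop))
        (.of_forall fun p ↦ (Complex.norm_exp_ofReal_mul_I _).le)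
    simp only [Real.fourierInv_eq', smul_eq_mul]
    rw [← integral_integral_swap hint]
    refine integral_congr_ae (.of_forall fun ξ ↦ ?_)
    simp only [charFun_apply, ← integral_const_mul]
    refine integral_congr_ae (.of_forall fun y ↦ ?_)
    have hinner : 2 * π * ⟪ξ, (2 * π)⁻¹ • y + x⟫_ℝ = ⟪y, ξ⟫_ℝ + 2 * π * ⟪ξ, x⟫_ℝ := by
      rw [inner_add_right, real_inner_smul_right, real_inner_comm, mul_add,
        mul_inv_cancel_left₀ (by positivity)]
    simp only [hinner, Complex.ofReal_add, add_mul, Complex.exp_add]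
    ring
  refine ⟨hg.1.mul_bdd (c := κ.real univ) measurable_charFun.aestronglyMeasurable
    (.of_forall norm_charFun_le), ?_⟩
  rw [funext hconv]
  have hshear : MeasurePreserving (fun p : E × E ↦ (p.1, (2 * π)⁻¹ • p.1 + p.2))
      (κ.prod volume) (κ.prod volume) :=
    (MeasurePreserving.id κ).skew_product (by fun_prop)
      (.of_forall fun y ↦ (measurePreserving_add_left volume _).map_eq)
  exact (hshear.integrable_comp_of_integrable (hg.2.comp_snd κ)).integral_prod_right

end HasIntegrableFourierInv

end Fourier

section ConvolutionExponential

variable {E : Type*} [AddMonoid E] [MeasurableSpace E]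

/-- The `n`-fold convolution power `κ^{∗n}`. -/
def convPow (κ : Measure E) : ℕ → Measure E
  | 0 => Measure.dirac 0
  | n + 1 => convPow κ n ∗ κ

/-- The convolution exponential `∑ κ^{∗n} / n!`, an unnormalised compound Poisson distribution. -/
def convExp (κ : Measure E) : Measure E :=
  Measure.sum fun n : ℕ ↦ (n.factorial : ℝ≥0∞)⁻¹ • convPow κ n

variable [MeasurableAdd₂ E] (κ : Measure E) [IsFiniteMeasure κ]

instance isFiniteMeasure_convPow (n : ℕ) : IsFiniteMeasure (convPow κ n) := by
  induction n with
  | zero => exact inferInstanceAs (IsFiniteMeasure (Measure.dirac 0))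
  | succ n ih => exact inferInstanceAs (IsFiniteMeasure (convPow κ n ∗ κ))

theorem convPow_apply_univ (n : ℕ) : convPow κ n univ = κ univ ^ n := by
  induction n with
  | zero => simp [convPow]
  | succ n ih =>
    rw [convPow, Measure.conv, Measure.map_apply measurable_add .univ, preimage_univ,
      ← univ_prod_univ, Measure.prod_prod, ih, pow_succ]

instance isFiniteMeasure_convExp : IsFiniteMeasure (convExp κ) where
  measure_univ_lt_top := by
    calc convExp κ univ = ∑' n : ℕ, ENNReal.ofReal (κ.real univ ^ n / n.factorial) := by
          rw [convExp, Measure.sum_apply _ .univ]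
          congr 1 with n
          rw [Measure.smul_apply, convPow_apply_univ, smul_eq_mul, ENNReal.ofReal_div_of_pos
            (by positivity), ENNReal.ofReal_pow measureReal_nonneg, ofReal_measureReal,
            ENNReal.ofReal_natCast, ENNReal.div_eq_inv_mul]
      _ < ∞ := (Real.summable_pow_div_factorial _).tsum_ofReal_lt_top

end ConvolutionExponential

section CharFun

variable {E : Type*} [NormedAddCommGroup E] [InnerProductSpace ℝ E] [MeasurableSpace E]
  [BorelSpace E] (κ : Measure E) [IsFiniteMeasure κ]

theorem integrable_exp_inner_mul_I (ξ : E) :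
    Integrable (fun v ↦ Complex.exp (⟪v, ξ⟫_ℝ * Complex.I)) κ :=
  .of_bound (C := 1) (Continuous.aestronglyMeasurable (by fun_prop))
    (.of_forall fun v ↦ (Complex.norm_exp_ofReal_mul_I _).le)

/-- The symmetrization `(κ + κ(-·)) / 2`, whose characteristic function is the cosine transform
of `κ`. -/
def symmetrization (κ : Measure E) : Measure E := (2 : ℝ≥0∞)⁻¹ • (κ + κ.map Neg.neg)

instance isFiniteMeasure_symmetrization : IsFiniteMeasure (symmetrization κ) :=
  Measure.smul_finite _ (by simp)

theorem charFun_symmetrization (ξ : E) :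
    charFun (symmetrization κ) ξ = ((∫ v, Real.cos ⟪v, ξ⟫_ℝ ∂κ : ℝ) : ℂ) := by
  have hmap : charFun (κ.map Neg.neg) ξ = (starRingEnd ℂ) (charFun κ ξ) := by
    rw [← charFun_neg]
    simpa using charFun_map_smul (μ := κ) (-1) ξ
  have hre : (charFun κ ξ).re = ∫ v, Real.cos ⟪v, ξ⟫_ℝ ∂κ := by
    rw [charFun_apply]
    have := integral_re (integrable_exp_inner_mul_I κ ξ)
    simpa [Complex.exp_ofReal_mul_I_re] using this.symm
  rw [← hre, Complex.re_eq_add_conj, ← hmap]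
  simp only [symmetrization, charFun_apply]
  rw [integral_smul_measure, integral_add_measure (integrable_exp_inner_mul_I _ ξ)
    (integrable_exp_inner_mul_I _ ξ)]
  simp [div_eq_inv_mul, mul_add]

variable [SecondCountableTopology E]

theorem charFun_convPow (ξ : E) (n : ℕ) : charFun (convPow κ n) ξ = charFun κ ξ ^ n := by
  induction n with
  | zero => simp [convPow, charFun_dirac]
  | succ n ih => rw [convPow, charFun_conv, ih, pow_succ]

theorem charFun_convExp (ξ : E) : charFun (convExp κ) ξ = Complex.exp (charFun κ ξ) := by
  have hsum : HasSum (fun n : ℕ ↦ charFun κ ξ ^ n / n.factorial) (charFun (convExp κ) ξ) := by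
    convert! hasSum_integral_measure (integrable_exp_inner_mul_I (convExp κ) ξ) using 2 with n
    rw [integral_smul_measure, ← charFun_apply, charFun_convPow]
    simp [div_eq_inv_mul]
  rw [Complex.exp_eq_exp_ℂ]
  exact hsum.unique (NormedSpace.expSeries_div_hasSum_exp _)

end CharFun

section LevySymbol

theorem iteratedDeriv_one_sub_cos_le (j : ℕ) :
    ∃ C, ∀ u, |iteratedDeriv j (fun u ↦ 1 - Real.cos u) u| ≤ C * |u| ^ (2 - j) := by
  have hderiv : deriv (fun u ↦ 1 - Real.cos u) = Real.sin := by ext u; simp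
  match j with
  | 0 =>
    refine ⟨1 / 2, fun u ↦ ?_⟩
    rw [iteratedDeriv_zero, abs_of_nonneg (by linarith [Real.cos_le_one u]), Nat.sub_zero, sq_abs]
    linarith [Real.one_sub_sq_div_two_le_cos (x := u)]
  | 1 => exact ⟨1, fun u ↦ by simpa [iteratedDeriv_one, hderiv] using Real.abs_sin_le_abs⟩
  | n + 2 =>
    refine ⟨1, fun u ↦ ?_⟩
    rw [iteratedDeriv_succ', hderiv]
    simpa using Real.abs_iteratedDeriv_sin_le_one (n + 1) u

/-- The integrability condition `∫ min(1, |v|²) dν(v) < ∞` on a Lévy measure. -/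
def IsLevyIntegrable {E : Type*} [NormedAddCommGroup E] [MeasurableSpace E] (ν : Measure E) :
    Prop :=
  Integrable (fun v ↦ min 1 (‖v‖ ^ 2)) ν

/-- The small-jump part of a Lévy measure, its restriction to the closed unit ball. -/
def smallJumps {E : Type*} [NormedAddCommGroup E] [MeasurableSpace E] (ν : Measure E) :
    Measure E :=
  ν.restrict (closedBall 0 1)

/-- The large-jump part of a Lévy measure, its restriction to the complement of the closed unit
ball. -/
def largeJumps {E : Type*} [NormedAddCommGroup E] [MeasurableSpace E] (ν : Measure E) :
    Measure E :=
  ν.restrict (closedBall 0 1)ᶜ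

theorem IsLevyIntegrable.isFiniteMeasure_largeJumps {E : Type*} [NormedAddCommGroup E]
    [MeasurableSpace E] {ν : Measure E} (hν : IsLevyIntegrable ν) :
    IsFiniteMeasure (largeJumps ν) := by
  rw [largeJumps, isFiniteMeasure_restrict]
  refine ne_top_of_le_ne_top (hν.measure_ge_lt_top one_pos).ne (measure_mono fun v hv ↦ ?_)
  have hv : 1 < ‖v‖ := by simpa only [mem_compl_iff, mem_closedBall_zero_iff, not_le] using hv
  exact le_min le_rfl (one_le_pow₀ hv.le)

theorem IsLevyIntegrable.integrable_norm_pow_smallJumps {E : Type*} [NormedAddCommGroup E]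
    [MeasurableSpace E] [OpensMeasurableSpace E] {ν : Measure E} (hν : IsLevyIntegrable ν) {j : ℕ}
    (hj : 2 ≤ j) : Integrable (fun v ↦ ‖v‖ ^ j) (smallJumps ν) := by
  refine (Integrable.restrict hν).mono' (by fun_prop)
    ((ae_restrict_iff' measurableSet_closedBall).2 <| .of_forall fun v hv ↦ ?_)
  have hv : ‖v‖ ≤ 1 := mem_closedBall_zero_iff.1 hv
  rw [Real.norm_of_nonneg (by positivity)]
  exact le_min (pow_le_one₀ (norm_nonneg v) hv) (pow_le_pow_of_le_one (norm_nonneg v) hv hj)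

theorem one_sub_cos_inner_le {E : Type*} [NormedAddCommGroup E] [InnerProductSpace ℝ E]
    (v ξ : E) : 1 - Real.cos ⟪v, ξ⟫_ℝ ≤ (2 + ‖ξ‖ ^ 2) * min 1 (‖v‖ ^ 2) := by
  have hcos : 1 - Real.cos ⟪v, ξ⟫_ℝ ≤ (‖v‖ * ‖ξ‖) ^ 2 / 2 := by
    have hsq : ⟪v, ξ⟫_ℝ ^ 2 ≤ (‖v‖ * ‖ξ‖) ^ 2 :=
      sq_le_sq' (neg_le_of_abs_le (abs_real_inner_le_norm v ξ)) (real_inner_le_norm v ξ)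
    linarith [Real.one_sub_sq_div_two_le_cos (x := ⟪v, ξ⟫_ℝ)]
  rcases min_cases 1 (‖v‖ ^ 2) with ⟨h, _⟩ | ⟨h, _⟩ <;> rw [h]
  · nlinarith [Real.neg_one_le_cos ⟪v, ξ⟫_ℝ, sq_nonneg ‖ξ‖]
  · nlinarith [mul_nonneg (sq_nonneg ‖v‖) (sq_nonneg ‖ξ‖), sq_nonneg ‖v‖]

variable {E : Type} [NormedAddCommGroup E] [InnerProductSpace ℝ E] [MeasurableSpace E]

/-- The symbol `ξ ↦ ∫ (1 - cos ⟪v, ξ⟫) dν(v)` of the symmetric pure-jump Lévy operator with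
Lévy measure `ν`. -/
def levySymbol (ν : Measure E) (ξ : E) : ℝ := ∫ v, (1 - Real.cos ⟪v, ξ⟫_ℝ) ∂ν

theorem levySymbol_zero (ν : Measure E) : levySymbol ν 0 = 0 := by simp [levySymbol]

theorem levySymbol_le (κ : Measure E) [IsFiniteMeasure κ] (ξ : E) :
    levySymbol κ ξ ≤ 2 * κ.real univ :=
  (le_norm_self _).trans <| norm_integral_le_of_norm_le_const <| .of_forall fun v ↦ by
    rw [Real.norm_of_nonneg] <;>
      linarith [Real.neg_one_le_cos ⟪v, ξ⟫_ℝ, Real.cos_le_one ⟪v, ξ⟫_ℝ]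

variable [BorelSpace E]

theorem levySymbol_eq_sub_charFun (κ : Measure E) [IsFiniteMeasure κ] (ξ : E) :
    (levySymbol κ ξ : ℂ) = κ.real univ - charFun (symmetrization κ) ξ := by
  have hcos : Integrable (fun v ↦ Real.cos ⟪v, ξ⟫_ℝ) κ :=
    .of_bound (C := 1) (Continuous.aestronglyMeasurable (by fun_prop))
      (.of_forall fun v ↦ Real.abs_cos_le_one _)
  rw [charFun_symmetrization, levySymbol, integral_sub (integrable_const 1) hcos]
  simp

variable {ν : Measure E}

theorem IsLevyIntegrable.integrable_one_sub_cos (hν : IsLevyIntegrable ν) (ξ : E) :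
    Integrable (fun v ↦ 1 - Real.cos ⟪v, ξ⟫_ℝ) ν := by
  refine (hν.const_mul (2 + ‖ξ‖ ^ 2)).mono' (Continuous.aestronglyMeasurable (by fun_prop))
    (.of_forall fun v ↦ ?_)
  rw [Real.norm_of_nonneg (by linarith [Real.cos_le_one ⟪v, ξ⟫_ℝ])]
  exact one_sub_cos_inner_le v ξ

theorem IsLevyIntegrable.levySymbol_smallJumps_add_largeJumps (hν : IsLevyIntegrable ν) (ξ : E) :
    levySymbol (smallJumps ν) ξ + levySymbol (largeJumps ν) ξ = levySymbol ν ξ :=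
  integral_add_compl measurableSet_closedBall (hν.integrable_one_sub_cos ξ)

theorem IsLevyIntegrable.exists_norm_pow_mul_exp_neg_levySymbol_smallJumps_le
    (hν : IsLevyIntegrable ν)
    (hdecay : ∀ k : ℕ, ∃ B, ∀ ξ, ‖ξ‖ ^ k * Real.exp (-levySymbol ν ξ) ≤ B) (k : ℕ) :
    ∃ B, ∀ ξ, ‖ξ‖ ^ k * Real.exp (-levySymbol (smallJumps ν) ξ) ≤ B := by
  have := hν.isFiniteMeasure_largeJumps
  obtain ⟨B, hB⟩ := hdecay k
  refine ⟨Real.exp (2 * (largeJumps ν).real univ) * B, fun ξ ↦ ?_⟩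
  have hle : -levySymbol (smallJumps ν) ξ ≤ 2 * (largeJumps ν).real univ + -levySymbol ν ξ := by
    linarith [hν.levySymbol_smallJumps_add_largeJumps ξ, levySymbol_le (largeJumps ν) ξ]
  calc ‖ξ‖ ^ k * Real.exp (-levySymbol (smallJumps ν) ξ)
      ≤ ‖ξ‖ ^ k * Real.exp (2 * (largeJumps ν).real univ + -levySymbol ν ξ) := by gcongr
    _ = Real.exp (2 * (largeJumps ν).real univ) * (‖ξ‖ ^ k * Real.exp (-levySymbol ν ξ)) := by
        rw [Real.exp_add]; ring
    _ ≤ Real.exp (2 * (largeJumps ν).real univ) * B := by gcongr; exact hB ξ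

variable [SecondCountableTopology E]

theorem IsLevyIntegrable.hasTemperateGrowth_levySymbol_smallJumps (hν : IsLevyIntegrable ν) :
    (levySymbol (smallJumps ν)).HasTemperateGrowth := by
  have := hasTemperateGrowth_integral_comp_inner_smul (E := E) (ν := smallJumps ν)
    (T := fun _ ↦ (1 : ℝ)) (contDiff_const.sub Real.contDiff_cos) iteratedDeriv_one_sub_cos_le
    aestronglyMeasurable_const
    (fun j hj ↦ by simpa only [norm_one, mul_one] using hν.integrable_norm_pow_smallJumps hj)
  simpa only [smul_eq_mul, mul_one] using! this

theorem IsLevyIntegrable.continuous_levySymbol (hν : IsLevyIntegrable ν) :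
    Continuous (levySymbol ν) := by
  have := hν.isFiniteMeasure_largeJumps
  have hlarge : Continuous (levySymbol (largeJumps ν)) := by
    have hre : levySymbol (largeJumps ν) = fun ξ ↦
        ((largeJumps ν).real univ - charFun (symmetrization (largeJumps ν)) ξ : ℂ).re :=
      funext fun ξ ↦ by rw [← levySymbol_eq_sub_charFun, Complex.ofReal_re]
    rw [hre]
    exact Complex.continuous_re.comp (continuous_const.sub continuous_charFun)
  rw [funext fun ξ ↦ (hν.levySymbol_smallJumps_add_largeJumps ξ).symm]
  exact hν.hasTemperateGrowth_levySymbol_smallJumps.1.continuous.add hlarge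

end LevySymbol

section SymbolFourier

variable {E : Type} [NormedAddCommGroup E] [InnerProductSpace ℝ E] [FiniteDimensional ℝ E]
  [MeasurableSpace E] [BorelSpace E] {ν : Measure E}

theorem IsLevyIntegrable.hasIntegrableFourierInv_levySymbol_pow_mul (hν : IsLevyIntegrable ν)
    (k : ℕ) : ∀ (S : SchwartzMap E ℂ) (κ : Measure E) [IsFiniteMeasure κ],
      HasIntegrableFourierInv fun ξ ↦ (levySymbol ν ξ : ℂ) ^ k * (S ξ * charFun κ ξ) := by
  have := hν.isFiniteMeasure_largeJumps
  set s := levySymbol (smallJumps ν)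
  set c := (largeJumps ν).real univ
  have hft : (fun ξ ↦ ((s ξ + c : ℝ) : ℂ)).HasTemperateGrowth :=
    Complex.ofRealCLM.hasTemperateGrowth.comp
      (hν.hasTemperateGrowth_levySymbol_smallJumps.add (.const c))
  induction k with
  | zero =>
    intro S κ _
    simpa only [pow_zero, one_mul] using (HasIntegrableFourierInv.of_schwartzMap S).mul_charFun κ
  | succ k ih =>
    intro S κ _
    refine (congrArg HasIntegrableFourierInv (funext fun ξ ↦ ?_)).mpr <|
      (ih (SchwartzMap.smulLeftCLM ℂ (fun ξ ↦ ((s ξ + c : ℝ) : ℂ)) S) κ).sub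
        (ih S (symmetrization (largeJumps ν) ∗ κ))
    rw [Pi.sub_apply, SchwartzMap.smulLeftCLM_apply_apply hft, charFun_conv, pow_succ,
      ← hν.levySymbol_smallJumps_add_largeJumps, Complex.ofReal_add,
      levySymbol_eq_sub_charFun (largeJumps ν)]
    push_cast
    simp only [smul_eq_mul]
    ring

theorem IsLevyIntegrable.hasIntegrableFourierInv_levySymbol_pow_mul_exp_neg
    (hν : IsLevyIntegrable ν)
    (hdecay : ∀ k : ℕ, ∃ B, ∀ ξ, ‖ξ‖ ^ k * Real.exp (-levySymbol ν ξ) ≤ B) (k : ℕ) :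
    HasIntegrableFourierInv fun ξ ↦
      ((levySymbol ν ξ ^ k * Real.exp (-levySymbol ν ξ) : ℝ) : ℂ) := by
  have := hν.isFiniteMeasure_largeJumps
  have hexp := hν.hasIntegrableFourierInv_levySymbol_pow_mul k
    ((Real.exp (-(largeJumps ν).real univ) : ℂ) •
      expNegSchwartz hν.hasTemperateGrowth_levySymbol_smallJumps
        (hν.exists_norm_pow_mul_exp_neg_levySymbol_smallJumps_le hdecay))
    (convExp (symmetrization (largeJumps ν)))
  refine (congrArg HasIntegrableFourierInv (funext fun ξ ↦ ?_)).mpr hexp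
  have hfactor : Complex.exp (-levySymbol ν ξ) = Complex.exp (-(largeJumps ν).real univ) *
      Complex.exp (-levySymbol (smallJumps ν) ξ) *
      Complex.exp (charFun (symmetrization (largeJumps ν)) ξ) := by
    rw [← Complex.exp_add, ← Complex.exp_add, ← hν.levySymbol_smallJumps_add_largeJumps,
      Complex.ofReal_add, levySymbol_eq_sub_charFun (largeJumps ν)]
    congr 1
    ring
  rw [smul_apply, expNegSchwartz_apply, charFun_convExp]
  push_cast
  rw [hfactor, smul_eq_mul]

end SymbolFourier

section StableSymbol

variable {σ : ℝ}

/-- The measure `r^{-1-σ} dr` on `(0, ∞)`, the radial part of a `σ`-stable Lévy measure. -/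
def radialStableMeasure (σ : ℝ) : Measure ℝ :=
  (volume.restrict (Ioi 0)).withDensity fun r ↦ ENNReal.ofReal (r ^ (-1 - σ))

instance sFinite_radialStableMeasure : SFinite (radialStableMeasure σ) :=
  inferInstanceAs (SFinite (Measure.withDensity _ _))

theorem integral_radialStableMeasure (f : ℝ → ℝ) :
    ∫ r, f r ∂radialStableMeasure σ = ∫ r in Ioi 0, f r * r ^ (-1 - σ) := by
  rw [radialStableMeasure, integral_withDensity_eq_integral_toReal_smul (by fun_prop)
    (.of_forall fun r ↦ ENNReal.ofReal_lt_top)]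
  refine setIntegral_congr_fun measurableSet_Ioi fun r hr ↦ ?_
  rw [ENNReal.toReal_ofReal (Real.rpow_nonneg (le_of_lt hr) _), smul_eq_mul, mul_comm]

theorem integrable_radialStableMeasure_iff {f : ℝ → ℝ} :
    Integrable f (radialStableMeasure σ) ↔ IntegrableOn (fun r ↦ f r * r ^ (-1 - σ)) (Ioi 0) := by
  rw [radialStableMeasure, integrable_withDensity_iff_integrable_smul' (by fun_prop)
    (.of_forall fun r ↦ ENNReal.ofReal_lt_top)]
  refine integrableOn_congr_fun (fun r hr ↦ ?_) measurableSet_Ioi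
  rw [ENNReal.toReal_ofReal (Real.rpow_nonneg (le_of_lt hr) _), smul_eq_mul, mul_comm]

theorem isLevyIntegrable_radialStableMeasure (hσ0 : 0 < σ) (hσ2 : σ < 2) :
    IsLevyIntegrable (radialStableMeasure σ) := by
  rw [IsLevyIntegrable, integrable_radialStableMeasure_iff,
    ← Ioc_union_Ioi_eq_Ioi (zero_le_one (α := ℝ))]
  refine IntegrableOn.union ?_ ?_
  · have hsmall : IntegrableOn (fun r : ℝ ↦ r ^ (1 - σ)) (Ioc 0 1) :=
      (intervalIntegrable_iff_integrableOn_Ioc_of_le zero_le_one).1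
        (intervalIntegral.intervalIntegrable_rpow' (by linarith))
    refine hsmall.congr_fun (fun r hr ↦ ?_) measurableSet_Ioc
    have hsq : ‖r‖ ^ 2 ≤ 1 := by rw [norm_eq_abs, sq_abs]; exact pow_le_one₀ hr.1.le hr.2
    rw [min_eq_right hsq, norm_eq_abs, sq_abs, ← Real.rpow_natCast, ← Real.rpow_add hr.1]
    norm_num
    ring_nf
  · refine (integrableOn_Ioi_rpow_of_lt (a := -1 - σ) (by linarith) one_pos).congr_fun
      (fun r hr ↦ ?_) measurableSet_Ioi
    have hsq : 1 ≤ ‖r‖ ^ 2 := by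
      rw [norm_eq_abs, sq_abs]; exact one_le_pow₀ (le_of_lt hr)
    rw [min_eq_left hsq, one_mul]

theorem levySymbol_radialStableMeasure (z : ℝ) :
    levySymbol (radialStableMeasure σ) z =
      ∫ r in Ioi 0, (1 - Real.cos (r * z)) * r ^ (-1 - σ) := by
  rw [levySymbol, integral_radialStableMeasure]
  simp only [RCLike.inner_apply, conj_trivial, mul_comm z]

theorem levySymbol_radialStableMeasure_eq_mul_rpow (hσ0 : 0 < σ) (z : ℝ) :
    levySymbol (radialStableMeasure σ) z = levySymbol (radialStableMeasure σ) 1 * |z| ^ σ := by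
  rcases eq_or_ne z 0 with rfl | hz
  · simp [levySymbol_zero, Real.zero_rpow hσ0.ne']
  have hz : 0 < |z| := abs_pos.2 hz
  have hcongr : ∀ r ∈ Ioi (0 : ℝ), (1 - Real.cos (r * z)) * r ^ (-1 - σ) =
      |z| ^ (1 + σ) * ((1 - Real.cos (|z| * r)) * (|z| * r) ^ (-1 - σ)) := fun r hr ↦ by
    have hr : 0 < r := hr
    have hcos : Real.cos (|z| * r) = Real.cos (r * z) := by
      rw [← Real.cos_abs (r * z), abs_mul, abs_of_pos hr, mul_comm]
    rw [hcos, Real.mul_rpow hz.le hr.le, ← neg_add', Real.rpow_neg hz.le]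
    field_simp
  rw [levySymbol_radialStableMeasure, levySymbol_radialStableMeasure,
    setIntegral_congr_fun measurableSet_Ioi hcongr, integral_const_mul,
    integral_comp_mul_left_Ioi (fun r ↦ (1 - Real.cos r) * r ^ (-1 - σ)) 0 hz, mul_zero,
    smul_eq_mul, Real.rpow_add hz, Real.rpow_one]
  simp only [mul_one]
  field_simp

theorem levySymbol_radialStableMeasure_one_pos (hσ0 : 0 < σ) (hσ2 : σ < 2) :
    0 < levySymbol (radialStableMeasure σ) 1 := by
  have hint : IntegrableOn (fun r : ℝ ↦ (1 - Real.cos r) * r ^ (-1 - σ)) (Ioi 0) := by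
    simpa using integrable_radialStableMeasure_iff.1
      ((isLevyIntegrable_radialStableMeasure hσ0 hσ2).integrable_one_sub_cos 1)
  simp only [levySymbol_radialStableMeasure, mul_one]
  rw [setIntegral_pos_iff_support_of_nonneg_ae _ hint]
  · refine lt_of_lt_of_le ?_ (measure_mono (s := Ioo 0 1) fun r hr ↦ ⟨?_, hr.1⟩)
    · simp
    · have hcos : Real.cos r < 1 := by
        simpa using Real.cos_lt_cos_of_nonneg_of_le_pi le_rfl
          (by linarith [hr.2, Real.pi_gt_three]) hr.1
      exact (mul_pos (sub_pos.2 hcos) (Real.rpow_pos_of_pos hr.1 _)).ne'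
  · refine (ae_restrict_iff' measurableSet_Ioi).2 (.of_forall fun r hr ↦ ?_)
    exact mul_nonneg (sub_nonneg.2 (Real.cos_le_one r)) (Real.rpow_nonneg (le_of_lt hr) _)

variable {N : ℕ} {μ : Measure (Sph N)}

/-- The `σ`-stable Lévy measure with spectral measure `μ`, whose polar decomposition is
`r^{-1-σ} dr dμ(θ)`. -/
def stableLevyMeasure (σ : ℝ) (μ : Measure (Sph N)) : Measure (Eu N) :=
  (μ.prod (radialStableMeasure σ)).map fun p ↦ p.2 • (p.1 : Eu N)

theorem isLevyIntegrable_stableLevyMeasure [IsFiniteMeasure μ] (hσ0 : 0 < σ) (hσ2 : σ < 2) :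
    IsLevyIntegrable (stableLevyMeasure σ μ) := by
  rw [IsLevyIntegrable, stableLevyMeasure, integrable_map_measure (by fun_prop) (by fun_prop)]
  refine (Integrable.comp_snd (isLevyIntegrable_radialStableMeasure hσ0 hσ2) μ).congr
    (.of_forall fun p ↦ ?_)
  simp [norm_smul]

theorem symb_eq_levySymbol [IsFiniteMeasure μ] (hσ0 : 0 < σ) (hσ2 : σ < 2) (ξ : Eu N) :
    symb N σ μ ξ = levySymbol (stableLevyMeasure σ μ) ξ := by
  have hint := (isLevyIntegrable_stableLevyMeasure (μ := μ) hσ0 hσ2).integrable_one_sub_cos ξ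
  rw [stableLevyMeasure, integrable_map_measure (by fun_prop) (by fun_prop)] at hint
  rw [levySymbol, stableLevyMeasure, integral_map (by fun_prop) (by fun_prop)]
  refine Eq.trans ?_ (integral_prod _ hint).symm
  simp only [symb, Function.comp_apply, integral_radialStableMeasure, real_inner_comm,
    real_inner_smul_right]

theorem Elliptic.le_symb {lam : ℝ} (hell : Elliptic N σ μ lam) (hσ0 : 0 < σ) (ξ : Eu N) :
    levySymbol (radialStableMeasure σ) 1 * lam * ‖ξ‖ ^ σ ≤ symb N σ μ ξ := by
  have hC : 0 ≤ levySymbol (radialStableMeasure σ) 1 := integral_nonneg fun r ↦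
    sub_nonneg.2 (Real.cos_le_one _)
  have hint : lam * ‖ξ‖ ^ σ ≤ ∫ θ : Sph N, |⟪ξ, (θ : Eu N)⟫_ℝ| ^ σ ∂μ := by
    rcases eq_or_ne ξ 0 with rfl | hξ
    · simp [Real.zero_rpow hσ0.ne']
    have hξ : 0 < ‖ξ‖ := norm_pos_iff.2 hξ
    have hunit := hell ⟨‖ξ‖⁻¹ • ξ, by simp [norm_smul, hξ.ne']⟩
    simp only [real_inner_smul_left, abs_mul, abs_of_pos (inv_pos.2 hξ),
      Real.mul_rpow (inv_pos.2 hξ).le (abs_nonneg _), Real.inv_rpow hξ.le,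
      integral_const_mul] at hunit
    rwa [inv_mul_eq_div, le_div_iff₀ (by positivity)] at hunit
  calc levySymbol (radialStableMeasure σ) 1 * lam * ‖ξ‖ ^ σ
      ≤ levySymbol (radialStableMeasure σ) 1 * ∫ θ : Sph N, |⟪ξ, (θ : Eu N)⟫_ℝ| ^ σ ∂μ := by
        rw [mul_assoc]; gcongr
    _ = symb N σ μ ξ := by
        simp only [symb, ← levySymbol_radialStableMeasure,
          levySymbol_radialStableMeasure_eq_mul_rpow hσ0 ⟪_, _⟫_ℝ, integral_const_mul]

end StableSymbol

section Profile

open scoped FourierTransform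

variable {N : ℕ} {σ lam : ℝ} {μ : Measure (Sph N)}

theorem LkPhi_eq_re_fourierInv (k : ℕ) (x : Eu N) :
    LkPhi N σ μ k x = (2 * π) ^ (-(N : ℝ)) *
      (𝓕⁻ (fun ξ ↦ ((symb N σ μ ξ ^ k * Real.exp (-symb N σ μ ξ) : ℝ) : ℂ))
        ((2 * π)⁻¹ • x)).re := by
  rw [LkPhi, Real.fourierInv_eq']
  congr 3 with ξ
  rw [real_inner_smul_right, mul_inv_cancel_left₀ (by positivity), real_inner_comm, smul_eq_mul,
    mul_comm, mul_comm Complex.I]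

variable [IsFiniteMeasure μ]

theorem continuous_symb (hσ0 : 0 < σ) (hσ2 : σ < 2) : Continuous (symb N σ μ) := by
  rw [funext (symb_eq_levySymbol hσ0 hσ2)]
  exact (isLevyIntegrable_stableLevyMeasure hσ0 hσ2).continuous_levySymbol

namespace Elliptic

theorem hasIntegrableFourierInv_symb_pow_mul_exp_neg (hell : Elliptic N σ μ lam) (hlam : 0 < lam)
    (hσ0 : 0 < σ) (hσ2 : σ < 2) (k : ℕ) :
    HasIntegrableFourierInv fun ξ ↦
      ((symb N σ μ ξ ^ k * Real.exp (-symb N σ μ ξ) : ℝ) : ℂ) := by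
  have hdecay := exists_norm_pow_mul_exp_neg_le_of_rpow_le
    (mul_pos (levySymbol_radialStableMeasure_one_pos hσ0 hσ2) hlam) hσ0 (hell.le_symb hσ0)
  simp only [symb_eq_levySymbol hσ0 hσ2] at hdecay ⊢
  exact (isLevyIntegrable_stableLevyMeasure hσ0
    hσ2).hasIntegrableFourierInv_levySymbol_pow_mul_exp_neg hdecay k

theorem integrable_LkPhi (hell : Elliptic N σ μ lam) (hlam : 0 < lam) (hσ0 : 0 < σ)
    (hσ2 : σ < 2) (k : ℕ) : Integrable (LkPhi N σ μ k) := by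
  rw [funext (LkPhi_eq_re_fourierInv k)]
  exact ((hell.hasIntegrableFourierInv_symb_pow_mul_exp_neg hlam hσ0 hσ2 k).2.re.comp_smul
    (inv_ne_zero Real.two_pi_pos.ne')).const_mul _

theorem integral_LkPhi (hell : Elliptic N σ μ lam) (hlam : 0 < lam) (hσ0 : 0 < σ)
    (hσ2 : σ < 2) (k : ℕ) : ∫ x, LkPhi N σ μ k x = 0 ^ k := by
  set g : Eu N → ℂ := fun ξ ↦ ((symb N σ μ ξ ^ k * Real.exp (-symb N σ μ ξ) : ℝ) : ℂ) with hg
  have hgF : HasIntegrableFourierInv g :=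
    hell.hasIntegrableFourierInv_symb_pow_mul_exp_neg hlam hσ0 hσ2 k
  have hgc : Continuous g := by
    have := continuous_symb (μ := μ) hσ0 hσ2
    fun_prop
  have hg0 : g 0 = 0 ^ k := by simp [hg, symb]
  calc ∫ x, LkPhi N σ μ k x
      = (2 * π) ^ (-(N : ℝ)) * ∫ x, (𝓕⁻ g ((2 * π)⁻¹ • x)).re := by
        simp only [LkPhi_eq_re_fourierInv, integral_const_mul, hg]
    _ = ∫ x, (𝓕⁻ g x).re := by
        rw [Measure.integral_comp_smul volume (fun x ↦ (𝓕⁻ g x).re), finrank_euclideanSpace_fin,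
          inv_pow, inv_inv, abs_of_pos (by positivity), smul_eq_mul, Real.rpow_neg (by positivity),
          Real.rpow_natCast, inv_mul_cancel_left₀ (by positivity)]
    _ = 0 ^ k := by
        have hre := integral_re hgF.2
        simp only [RCLike.re_eq_complex_re] at hre
        rw [hre, hgF.integral_fourierInv hgc, hg0, ← Complex.ofReal_zero, ← Complex.ofReal_pow,
          Complex.ofReal_re]

end Elliptic

end Profile

section SelfSimilar

theorem lintegral_Ioo_inv {α β : ℝ} (hα : 0 < α) (hαβ : α ≤ β) :
    ∫⁻ t in Ioo α β, ENNReal.ofReal t⁻¹ = ENNReal.ofReal (Real.log (β / α)) := by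
  have hzero : (0 : ℝ) ∉ uIcc α β := by
    rw [uIcc_of_le hαβ]
    exact fun h ↦ hα.not_ge h.1
  have hint : IntegrableOn (fun t : ℝ ↦ t⁻¹) (Ioo α β) :=
    (intervalIntegrable_iff_integrableOn_Ioo_of_le hαβ).1 <|
      intervalIntegral.intervalIntegrable_inv (fun t ht h ↦ hzero (h ▸ ht)) continuousOn_id
  rw [← integral_inv hzero, intervalIntegral.integral_of_le hαβ, integral_Ioc_eq_integral_Ioo,
    ofReal_integral_eq_lintegral_ofReal hint]
  exact (ae_restrict_iff' measurableSet_Ioo).2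
    (.of_forall fun t ht ↦ (inv_pos.2 (hα.trans ht.1)).le)

theorem lintegral_indicator_mul_mem_Ioo_inv {α β c : ℝ} (hα : 0 < α) (hαβ : α ≤ β) (hc : 0 < c) :
    ∫⁻ t in Ioi 0, {t | t * c ∈ Ioo α β}.indicator (fun t ↦ ENNReal.ofReal t⁻¹) t =
      ENNReal.ofReal (Real.log (β / α)) := by
  have hset : {t | t * c ∈ Ioo α β} = Ioo (α / c) (β / c) := by
    ext t
    simp only [mem_ofPred_eq, mem_Ioo, div_lt_iff₀ hc, lt_div_iff₀ hc]
  have hsub : Ioo (α / c) (β / c) ⊆ Ioi 0 := fun t ht ↦ (div_pos hα hc).trans ht.1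
  rw [hset, lintegral_indicator measurableSet_Ioo, Measure.restrict_restrict measurableSet_Ioo,
    inter_eq_left.2 hsub, lintegral_Ioo_inv (div_pos hα hc) (by gcongr),
    div_div_div_cancel_right₀ hc.ne']

variable {E : Type*} [NormedAddCommGroup E] [NormedSpace ℝ E] [FiniteDimensional ℝ E]
  [MeasurableSpace E] [BorelSpace E] (ν : Measure E) [ν.IsAddHaarMeasure]

theorem lintegral_comp_smul_of_pos {f : E → ℝ≥0∞} (hf : Measurable f) {c : ℝ} (hc : 0 < c) :
    ENNReal.ofReal (c ^ Module.finrank ℝ E) * ∫⁻ x, f (c • x) ∂ν = ∫⁻ x, f x ∂ν := by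
  rw [← lintegral_map hf (measurable_const_smul c), Measure.map_addHaar_smul ν hc.ne',
    lintegral_smul_measure, smul_eq_mul, ← mul_assoc, ← ENNReal.ofReal_mul (by positivity),
    abs_of_pos (by positivity), mul_inv_cancel₀ (by positivity), ENNReal.ofReal_one, one_mul]

theorem lintegral_rpow_mul_comp_rpow_smul (p : ℝ) {K : E × ℝ → ℝ≥0∞} (hK : Measurable K) :
    ∫⁻ q in univ ×ˢ Ioi 0, ENNReal.ofReal (q.2 ^ (p * Module.finrank ℝ E)) *
        K (q.2 ^ p • q.1, q.2) ∂ν.prod volume =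
      ∫⁻ y, (∫⁻ t in Ioi (0 : ℝ), K (y, t)) ∂ν := by
  rw [← Measure.prod_restrict, Measure.restrict_univ, lintegral_prod_symm' _ (by fun_prop),
    lintegral_lintegral_swap (f := fun y t ↦ K (y, t)) hK.aemeasurable]
  refine setLIntegral_congr_fun measurableSet_Ioi fun t ht ↦ ?_
  have ht : 0 < t := ht
  dsimp only
  rw [← lintegral_comp_smul_of_pos ν (f := fun y ↦ K (y, t)) (by fun_prop)
    (Real.rpow_pos_of_pos ht p), lintegral_const_mul _ (by fun_prop), Real.rpow_mul ht.le,
    Real.rpow_natCast]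

/-- The set of `(x, t)`, `t > 0`, at which `t * G (t^p x)` lies between `α` and `β`: an annulus for
the gauge `(x, t) ↦ t * G (t^p x)`, which has degree one under the dilations
`(x, t) ↦ (s^{-p} x, s t)`. -/
def selfSimilarShell (p : ℝ) (G : E → ℝ) (α β : ℝ) : Set (E × ℝ) :=
  {q | 0 < q.2 ∧ q.2 * G (q.2 ^ p • q.1) ∈ Ioo α β}

variable {p α β : ℝ} {G : E → ℝ}

theorem measurableSet_selfSimilarShell (hG : Measurable G) :
    MeasurableSet (selfSimilarShell p G α β) :=
  (measurableSet_lt measurable_const measurable_snd).inter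
    (measurableSet_Ioo.preimage (by fun_prop))

theorem setLIntegral_selfSimilarShell (hα : 0 < α) (hαβ : α ≤ β) (hG : Measurable G)
    (hG0 : ∀ y, 0 < G y) {H : E → ℝ≥0∞} (hH : Measurable H) :
    ∫⁻ q in selfSimilarShell p G α β, ENNReal.ofReal (q.2 ^ (p * Module.finrank ℝ E - 1)) *
        H (q.2 ^ p • q.1) ∂ν.prod volume =
      ENNReal.ofReal (Real.log (β / α)) * ∫⁻ y, H y ∂ν := by
  set w : E → ℝ → ℝ≥0∞ := fun y ↦ {t | t * G y ∈ Ioo α β}.indicator fun t ↦ ENNReal.ofReal t⁻¹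
  have hw : Measurable fun q : E × ℝ ↦ w q.1 q.2 :=
    (by fun_prop : Measurable fun q : E × ℝ ↦ ENNReal.ofReal q.2⁻¹).indicator
      (measurableSet_Ioo.preimage (by fun_prop : Measurable fun q : E × ℝ ↦ q.2 * G q.1))
  have hGset : MeasurableSet {q : E × ℝ | q.2 * G (q.2 ^ p • q.1) ∈ Ioo α β} :=
    measurableSet_Ioo.preimage (by fun_prop)
  have hshell : selfSimilarShell p G α β =
      {q | q.2 * G (q.2 ^ p • q.1) ∈ Ioo α β} ∩ univ ×ˢ Ioi 0 := by
    ext q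
    simp [selfSimilarShell, and_comm]
  calc ∫⁻ q in selfSimilarShell p G α β, ENNReal.ofReal (q.2 ^ (p * Module.finrank ℝ E - 1)) *
        H (q.2 ^ p • q.1) ∂ν.prod volume
      = ∫⁻ q in univ ×ˢ Ioi 0, ENNReal.ofReal (q.2 ^ (p * Module.finrank ℝ E)) *
          (H (q.2 ^ p • q.1) * w (q.2 ^ p • q.1) q.2) ∂ν.prod volume := by
        rw [hshell, ← setLIntegral_indicator hGset]
        refine setLIntegral_congr_fun (MeasurableSet.univ.prod measurableSet_Ioi) fun q hq ↦ ?_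
        have hq : 0 < q.2 := hq.2
        by_cases hqG : q.2 * G (q.2 ^ p • q.1) ∈ Ioo α β
        · simp only [w, indicator_apply, mem_ofPred_eq, if_pos hqG]
          rw [Real.rpow_sub_one hq.ne', div_eq_mul_inv, ENNReal.ofReal_mul (by positivity)]
          ring
        · simp only [w, indicator_apply, mem_ofPred_eq, if_neg hqG, mul_zero]
    _ = ∫⁻ y, (∫⁻ t in Ioi (0 : ℝ), H y * w y t) ∂ν :=
        lintegral_rpow_mul_comp_rpow_smul ν p (K := fun q ↦ H q.1 * w q.1 q.2)
          ((hH.comp measurable_fst).mul hw)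
    _ = ∫⁻ y, H y * ENNReal.ofReal (Real.log (β / α)) ∂ν := by
        refine lintegral_congr fun y ↦ ?_
        rw [lintegral_const_mul (H y) (f := w y) (hw.comp measurable_prodMk_left),
          lintegral_indicator_mul_mem_Ioo_inv hα hαβ (hG0 y)]
    _ = ENNReal.ofReal (Real.log (β / α)) * ∫⁻ y, H y ∂ν := by
        rw [lintegral_mul_const _ hH, mul_comm]

theorem map_rpow_smul_restrict_selfSimilarShell (hα : 0 < α) (hαβ : α ≤ β) (hG : Measurable G)
    (hG0 : ∀ y, 0 < G y) :
    (((ν.prod volume).restrict (selfSimilarShell p G α β)).withDensity fun q ↦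
        ENNReal.ofReal (q.2 ^ (p * Module.finrank ℝ E - 1))).map (fun q ↦ q.2 ^ p • q.1) =
      ENNReal.ofReal (Real.log (β / α)) • ν := by
  refine Measure.ext_of_lintegral _ fun H hH ↦ ?_
  rw [lintegral_map hH (by fun_prop), lintegral_withDensity_eq_lintegral_mul _ (by fun_prop)
    (by fun_prop), lintegral_smul_measure, smul_eq_mul,
    ← setLIntegral_selfSimilarShell ν hα hαβ hG hG0 hH]
  rfl

variable {ν} {F : E → ℝ}

theorem integrableOn_selfSimilarShell (hα : 0 < α) (hαβ : α ≤ β) (hG : Measurable G)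
    (hG0 : ∀ y, 0 < G y) (hF : Integrable F ν) :
    IntegrableOn (fun q ↦ q.2 ^ (p * Module.finrank ℝ E - 1) * F (q.2 ^ p • q.1))
      (selfSimilarShell p G α β) (ν.prod volume) := by
  have hmap := hF.smul_measure (ENNReal.ofReal_ne_top (r := Real.log (β / α)))
  rw [← map_rpow_smul_restrict_selfSimilarShell (p := p) ν hα hαβ hG hG0] at hmap
  have hdens := (integrable_withDensity_iff_integrable_smul' (by fun_prop)
    (.of_forall fun q ↦ ENNReal.ofReal_lt_top)).1 (hmap.comp_measurable (by fun_prop))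
  refine IntegrableOn.congr_fun hdens (fun q hq ↦ ?_) (measurableSet_selfSimilarShell hG)
  rw [ENNReal.toReal_ofReal (Real.rpow_nonneg hq.1.le _), smul_eq_mul, Function.comp_apply]

theorem setIntegral_selfSimilarShell (hα : 0 < α) (hαβ : α ≤ β) (hG : Measurable G)
    (hG0 : ∀ y, 0 < G y) (hF : AEStronglyMeasurable F ν) :
    ∫ q in selfSimilarShell p G α β, q.2 ^ (p * Module.finrank ℝ E - 1) * F (q.2 ^ p • q.1)
        ∂ν.prod volume =
      Real.log (β / α) * ∫ y, F y ∂ν := by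
  have hlog : 0 ≤ Real.log (β / α) := Real.log_nonneg ((one_le_div hα).2 hαβ)
  have hmap := map_rpow_smul_restrict_selfSimilarShell (p := p) ν hα hαβ hG hG0
  rw [← ENNReal.toReal_ofReal hlog, ← smul_eq_mul (ENNReal.toReal _),
    ← integral_smul_measure, ← hmap, integral_map (by fun_prop) (hmap ▸ hF.smul_measure _),
    integral_withDensity_eq_integral_toReal_smul (by fun_prop)
      (.of_forall fun q ↦ ENNReal.ofReal_lt_top)]
  refine setIntegral_congr_fun (measurableSet_selfSimilarShell hG) fun q hq ↦ ?_
  rw [ENNReal.toReal_ofReal (Real.rpow_nonneg hq.1.le _), smul_eq_mul]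

end SelfSimilar

section Annulus

theorem norm_sq_add_rpow_eq_rpow_mul {E : Type*} [SeminormedAddCommGroup E] [NormedSpace ℝ E]
    (σ : ℝ) (x : E) {t : ℝ} (ht : 0 < t) :
    ‖x‖ ^ 2 + t ^ (2 / σ) = t ^ (2 / σ) * (1 + ‖t ^ (-1 / σ) • x‖ ^ 2) := by
  have hcancel : t ^ (2 / σ) * (t ^ (-1 / σ)) ^ 2 = 1 := by
    rw [← Real.rpow_mul_natCast ht.le, ← Real.rpow_add ht]
    ring_nf
    exact Real.rpow_zero t
  rw [norm_smul, Real.norm_of_nonneg (Real.rpow_nonneg ht.le _)]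
  linear_combination -‖x‖ ^ 2 * hcancel

theorem setOf_parabolicAnnulus_eq_selfSimilarShell {E : Type*} [NormedAddCommGroup E]
    [NormedSpace ℝ E] {σ a b : ℝ} (hσ : 0 < σ) (ha : 0 < a) (hb : 0 < b) :
    {q : E × ℝ | 0 < q.2 ∧ a ^ 2 < ‖q.1‖ ^ 2 + q.2 ^ (2 / σ) ∧ ‖q.1‖ ^ 2 + q.2 ^ (2 / σ) < b ^ 2} =
      selfSimilarShell (-1 / σ) (fun y ↦ (1 + ‖y‖ ^ 2) ^ (σ / 2)) (a ^ σ) (b ^ σ) := by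
  ext ⟨x, t⟩
  refine and_congr_right fun ht : 0 < t ↦ ?_
  have hpow : ∀ c : ℝ, 0 < c → c ^ σ = (c ^ 2) ^ (σ / 2) := fun c hc ↦ by
    rw [← Real.rpow_natCast_mul hc.le]
    congr 1
    push_cast
    ring
  have hgauge : t * (1 + ‖t ^ (-1 / σ) • x‖ ^ 2) ^ (σ / 2) =
      (‖x‖ ^ 2 + t ^ (2 / σ)) ^ (σ / 2) := by
    rw [norm_sq_add_rpow_eq_rpow_mul σ x ht, Real.mul_rpow (by positivity) (by positivity),
      ← Real.rpow_mul ht.le, div_mul_div_cancel₀ hσ.ne', div_self two_ne_zero,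
      Real.rpow_one]
  rw [hgauge, hpow a ha, hpow b hb, mem_Ioo, Real.rpow_lt_rpow_iff (by positivity) (by positivity)
    (by positivity), Real.rpow_lt_rpow_iff (by positivity) (by positivity) (by positivity)]

theorem LheatK_eq_rpow_finrank_mul (N : ℕ) (σ : ℝ) (μ : Measure (Sph N)) (x : Eu N) (t : ℝ) :
    LheatK N σ μ x t =
      t ^ (-1 / σ * Module.finrank ℝ (Eu N) - 1) * LkPhi N σ μ 1 (t ^ (-1 / σ) • x) := by
  rw [LheatK, finrank_euclideanSpace_fin, div_mul_eq_mul_div, neg_one_mul]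

end Annulus

/-- Cancellation property of `𝓛P` on σ-parabolic annuli:
`∫_{B⁺_{a,b}} 𝓛P = 0`, the integrand being absolutely integrable there. -/
theorem stmt10 (N : ℕ) (hN : 1 ≤ N) (σ : ℝ) (hσ0 : 0 < σ) (hσ2 : σ < 2)
    (μ : Measure (Sph N)) [IsFiniteMeasure μ]
    (lam : ℝ) (hlam : 0 < lam) (hell : Elliptic N σ μ lam)
    (a b : ℝ) (ha : 0 < a) (hab : a < b) :
    IntegrableOn (fun q : Eu N × ℝ => LheatK N σ μ q.1 q.2)
      {q : Eu N × ℝ | 0 < q.2 ∧ a ^ 2 < ‖q.1‖ ^ 2 + q.2 ^ (2 / σ) ∧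
        ‖q.1‖ ^ 2 + q.2 ^ (2 / σ) < b ^ 2} volume ∧
    ∫ q : Eu N × ℝ in {q : Eu N × ℝ | 0 < q.2 ∧ a ^ 2 < ‖q.1‖ ^ 2 + q.2 ^ (2 / σ) ∧
        ‖q.1‖ ^ 2 + q.2 ^ (2 / σ) < b ^ 2}, LheatK N σ μ q.1 q.2 = 0 := by
  have hα : 0 < a ^ σ := Real.rpow_pos_of_pos ha σ
  have hαβ : a ^ σ ≤ b ^ σ := Real.rpow_le_rpow ha.le hab.le hσ0.le
  have hG : Measurable fun y : Eu N ↦ (1 + ‖y‖ ^ 2) ^ (σ / 2) := by fun_prop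
  have hG0 : ∀ y : Eu N, 0 < (1 + ‖y‖ ^ 2) ^ (σ / 2) := fun y ↦ by positivity
  have hint : Integrable (LkPhi N σ μ 1) := hell.integrable_LkPhi hlam hσ0 hσ2 1
  simp only [setOf_parabolicAnnulus_eq_selfSimilarShell hσ0 ha (ha.trans hab),
    LheatK_eq_rpow_finrank_mul, Measure.volume_eq_prod]
  refine ⟨integrableOn_selfSimilarShell hα hαβ hG hG0 hint, ?_⟩
  rw [setIntegral_selfSimilarShell hα hαβ hG hG0 hint.aestronglyMeasurable,
    hell.integral_LkPhi hlam hσ0 hσ2, pow_one, mul_zero]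
end
end
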